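/- arXiv:1507.04454 — 2 statements merged into one kernel-verified Lean document; each statement's English description precedes it below -/
import Mathlib

section
/- For every n ≥ 2, the ℚ-linear span of {t_σ : σ ∈ Sₙ} inside Inv(sl₂^{⊗n}) has dimension (n−2)! if and only if n ≤ 5. (Equivalently, the homotopy sl₂ weight system W^h_n, defined on the (n−2)!-dimensional space 𝒞ₙ of connected trees with legs labeled bijectively by {1,…,n}, is injective if and only if n ≤ 5.) -/
/- The homotopy sl₂ weight system on connected trees is injective iff n ≤ 5:
   for every n ≥ 2, the ℚ-span of the tensors t_σ (σ ∈ Sₙ), the κ-duals of the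
   permuted iterated-bracket forms κ^{⊗n}(t_σ, x₁⊗⋯⊗xₙ) =
   κ([[⋯[x_{σ(1)},x_{σ(2)}],⋯],x_{σ(n−1)}], x_{σ(n)}), has dimension (n−2)!
   if and only if n ≤ 5.  κ and the family t are quantified via their
   defining properties. -/

open scoped TensorProduct

set_option synthInstance.maxHeartbeats 1000000
set_option maxHeartbeats 1000000

noncomputable section

abbrev sl2 : Type := ↥(LieAlgebra.SpecialLinear.sl (Fin 2) ℚ)

def H : sl2 :=
  ⟨!![1, 0; 0, -1], show _ ∈ LinearMap.ker (Matrix.traceLinearMap (Fin 2) ℚ ℚ) from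
    LinearMap.mem_ker.2 (by simp [Matrix.trace_fin_two])⟩

def E : sl2 :=
  ⟨!![0, 1; 0, 0], show _ ∈ LinearMap.ker (Matrix.traceLinearMap (Fin 2) ℚ ℚ) from
    LinearMap.mem_ker.2 (by simp [Matrix.trace_fin_two])⟩

def F : sl2 :=
  ⟨!![0, 0; 1, 0], show _ ∈ LinearMap.ker (Matrix.traceLinearMap (Fin 2) ℚ ℚ) from
    LinearMap.mem_ker.2 (by simp [Matrix.trace_fin_two])⟩

/-- The n-fold tensor power sl₂^{⊗n}. -/
abbrev TP (n : ℕ) : Type := ⨂[ℚ] (_ : Fin n), sl2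

/-- The adjoint action of `x ∈ sl₂` on `sl₂^{⊗n}`, extended as a derivation. -/
def actOn (n : ℕ) (x : sl2) : TP n →ₗ[ℚ] TP n :=
  ∑ i : Fin n,
    PiTensorProduct.map (fun j => if j = i then LieAlgebra.ad ℚ sl2 x else LinearMap.id)

/-- The space of invariant tensors of `sl₂^{⊗n}`. -/
def Invariants (n : ℕ) : Submodule ℚ (TP n) :=
  ⨅ x : sl2, LinearMap.ker (actOn n x)

/-- Pairing of `sl₂^{⊗n}` against `x₁ ⊗ ⋯ ⊗ xₙ` via `κ^{⊗n}`:
on pure tensors, `pairT κ n x (a₁ ⊗ ⋯ ⊗ aₙ) = ∏ i, κ(aᵢ, xᵢ)`. -/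
def pairT (κ : sl2 →ₗ[ℚ] sl2 →ₗ[ℚ] ℚ) (n : ℕ) (x : Fin n → sl2) : TP n →ₗ[ℚ] ℚ :=
  PiTensorProduct.lift
    ((MultilinearMap.mkPiAlgebra ℚ (Fin n) ℚ).compLinearMap fun i => κ.flip (x i))

/-- Left-iterated Lie bracket of a list: `[[⋯[a₁,a₂],⋯],a_k]`. -/
def lBrk : List sl2 → sl2
  | [] => 0
  | a :: l => l.foldl (fun y z => ⁅y, z⁆) a

/-- `κ([[⋯[x₁,x₂],⋯],x_{k-1}], x_k)`, read as `κ(x₁,x₂)` when `k = 2`. -/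
def brkVal (κ : sl2 →ₗ[ℚ] sl2 →ₗ[ℚ] ℚ) {k : ℕ} (x : Fin k → sl2) : ℚ :=
  κ (lBrk (List.ofFn x).dropLast) ((List.ofFn x).getLastD 0)

/-! ### sl2 computations -/
open Submodule

theorem sl2_decomp (x : sl2) : x = x.1 0 0 • H + x.1 0 1 • E + x.1 1 0 • F := by
  have hx : x.1.trace = 0 := x.2
  rw [Matrix.trace_fin_two] at hx
  apply Subtype.ext
  ext i j
  fin_cases i <;> fin_cases j <;> simp [H, E, F]
  linarith

theorem brHE : ⁅H, E⁆ = (2:ℚ) • E := by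
  apply Subtype.ext
  ext i j
  fin_cases i <;> fin_cases j <;> simp [H, E, LieSubalgebra.coe_bracket, Ring.lie_def]; norm_num
theorem brHF : ⁅H, F⁆ = (-2:ℚ) • F := by
  apply Subtype.ext
  ext i j
  fin_cases i <;> fin_cases j <;> simp [H, F, LieSubalgebra.coe_bracket, Ring.lie_def]; norm_num
theorem brEF : ⁅E, F⁆ = H := by
  apply Subtype.ext
  ext i j
  fin_cases i <;> fin_cases j <;> simp [H, E, F, LieSubalgebra.coe_bracket, Ring.lie_def]
theorem brEH : ⁅E, H⁆ = (-2:ℚ) • E := by rw [← lie_skew, brHE, neg_smul]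
theorem brFH : ⁅F, H⁆ = (2:ℚ) • F := by rw [← lie_skew, brHF, neg_smul, neg_neg]
theorem brFE : ⁅F, E⁆ = (-1:ℚ) • H := by rw [← lie_skew, brEF, neg_smul, one_smul]

/-- The hypotheses on `κ`, bundled. -/
structure IsK (κ : sl2 →ₗ[ℚ] sl2 →ₗ[ℚ] ℚ) : Prop where
  hHH : κ H H = 2
  hEF : κ E F = 1
  hFE : κ F E = 1
  hHE : κ H E = 0
  hEH : κ E H = 0
  hHF : κ H F = 0
  hFH : κ F H = 0
  hEE : κ E E = 0
  hFF : κ F F = 0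

theorem IsK.eq {κ : sl2 →ₗ[ℚ] sl2 →ₗ[ℚ] ℚ} (h : IsK κ) (x y : sl2) :
    κ x y = 2 * x.1 0 0 * y.1 0 0 + x.1 0 1 * y.1 1 0 + x.1 1 0 * y.1 0 1 := by
  conv_lhs => rw [sl2_decomp x, sl2_decomp y]
  simp only [map_add, map_smul, LinearMap.add_apply, LinearMap.smul_apply, h.hHH, h.hEF, h.hFE,
    h.hHE, h.hEH, h.hHF, h.hFH, h.hEE, h.hFF, smul_eq_mul]
  ring

theorem IsK.symm {κ : sl2 →ₗ[ℚ] sl2 →ₗ[ℚ] ℚ} (h : IsK κ) (x y : sl2) : κ x y = κ y x := by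
  rw [h.eq, h.eq]; ring

theorem IsK.inv {κ : sl2 →ₗ[ℚ] sl2 →ₗ[ℚ] ℚ} (h : IsK κ) (x y z : sl2) :
    κ ⁅x, y⁆ z = - κ x ⁅z, y⁆ := by
  have hx : x.1.trace = 0 := x.2
  have hy : y.1.trace = 0 := y.2
  have hz : z.1.trace = 0 := z.2
  rw [Matrix.trace_fin_two] at hx hy hz
  have hx' : x.1 1 1 = - x.1 0 0 := by linarith
  have hy' : y.1 1 1 = - y.1 0 0 := by linarith
  have hz' : z.1 1 1 = - z.1 0 0 := by linarith
  rw [h.eq, h.eq]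
  simp only [LieSubalgebra.coe_bracket, Ring.lie_def, Matrix.sub_apply, Matrix.mul_apply,
    Fin.sum_univ_two, hx', hy', hz']
  ring

/-! ### Injectivity of the pairing -/

def sl2c : sl2 ≃ₗ[ℚ] (Fin 3 → ℚ) where
  toFun x := ![x.1 0 0, x.1 0 1, x.1 1 0]
  map_add' x y := by ext i; fin_cases i <;> simp
  map_smul' c x := by ext i; fin_cases i <;> simp
  invFun v := v 0 • H + v 1 • E + v 2 • F
  left_inv x := by
    conv_rhs => rw [sl2_decomp x]
    simp
  right_inv v := by ext i; fin_cases i <;> simp [H, E, F]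

def sl2b : Module.Basis (Fin 3) ℚ sl2 := Module.Basis.ofEquivFun sl2c

theorem finrank_sl2 : Module.finrank ℚ sl2 = 3 := by
  rw [Module.finrank_eq_card_basis sl2b]; simp

instance : Module.Finite ℚ sl2 := Module.Finite.of_basis sl2b

def dualv : Fin 3 → sl2 := ![(1/2 : ℚ) • H, F, E]

theorem IsK.flip_dualv {κ : sl2 →ₗ[ℚ] sl2 →ₗ[ℚ] ℚ} (h : IsK κ) (x : sl2) (i : Fin 3) :
    κ x (dualv i) = sl2b.repr x i := by
  have : sl2b.repr x i = ![x.1 0 0, x.1 0 1, x.1 1 0] i := rfl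
  rw [this, h.eq]
  fin_cases i <;> simp [dualv, H, E, F]
  ring

def Phi (κ : sl2 →ₗ[ℚ] sl2 →ₗ[ℚ] ℚ) (n : ℕ) : TP n →ₗ[ℚ] ((Fin n → sl2) → ℚ) :=
  LinearMap.pi fun x => pairT κ n x

theorem IsK.Phi_inj {κ : sl2 →ₗ[ℚ] sl2 →ₗ[ℚ] ℚ} (h : IsK κ) (n : ℕ) :
    Function.Injective (Phi κ n) := by
  rw [← LinearMap.ker_eq_bot, LinearMap.ker_eq_bot']
  intro T hT
  let B := Basis.piTensorProduct (fun _ : Fin n => sl2b)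
  apply B.ext_elem
  intro p
  have key : pairT κ n (fun i => dualv (p i)) = B.coord p := by
    apply PiTensorProduct.ext
    ext x
    simp only [LinearMap.compMultilinearMap_apply, pairT, PiTensorProduct.lift.tprod,
      MultilinearMap.compLinearMap_apply, MultilinearMap.mkPiAlgebra_apply,
      LinearMap.flip_apply, h.flip_dualv, B, Module.Basis.coord_apply,
      Basis.piTensorProduct_repr_tprod_apply]
  have h1 : pairT κ n (fun i => dualv (p i)) T = 0 := congrFun hT _
  rw [key] at h1
  simpa using h1

/-! ### Words -/

def CW {n : ℕ} (l : List (Fin n)) : (Fin n → sl2) → sl2 := fun x => lBrk (l.map x)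

theorem CW_nil {n : ℕ} : CW ([] : List (Fin n)) = 0 := rfl

theorem CW_append {n : ℕ} (l : List (Fin n)) (hl : l ≠ []) (j : Fin n) (x : Fin n → sl2) :
    CW (l ++ [j]) x = ⁅CW l x, x j⁆ := by
  cases l with
  | nil => exact absurd rfl hl
  | cons a l => simp [CW, lBrk, List.foldl_append]

/-- Bracketing with `x j` on the right. -/
def BR {n : ℕ} (j : Fin n) : ((Fin n → sl2) → sl2) →ₗ[ℚ] ((Fin n → sl2) → sl2) where
  toFun f := fun x => ⁅f x, x j⁆
  map_add' f g := by ext1 x; simp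
  map_smul' c f := by ext1 x; simp

theorem BR_CW {n : ℕ} (l : List (Fin n)) (hl : l ≠ []) (j : Fin n) :
    BR j (CW l) = CW (l ++ [j]) := by
  ext1 x; rw [CW_append l hl]; rfl

theorem lemA {n : ℕ} (m : List (Fin n)) : ∀ p : List (Fin n), p ≠ [] →
    (fun x => ⁅CW p x, CW m x⁆) ∈ span ℚ {f | ∃ m', m'.Perm m ∧ f = CW (p ++ m')} := by
  induction m using List.reverseRecOn with
  | nil =>
    intro p _
    have : (fun x => ⁅CW p x, CW ([] : List (Fin n)) x⁆) = 0 := by ext1 x; simp [CW_nil]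
    rw [this]; exact zero_mem _
  | append_singleton m j ih =>
    intro p hp
    by_cases hm : m = []
    · subst hm
      refine subset_span ⟨[j], by simp, ?_⟩
      ext1 x; rw [CW_append p hp]; rfl
    · have e : (fun x => ⁅CW p x, CW (m ++ [j]) x⁆)
          = BR j (fun x => ⁅CW p x, CW m x⁆) - (fun x => ⁅CW (p ++ [j]) x, CW m x⁆) := by
        ext1 x
        simp only [CW_append m hm, CW_append p hp, Pi.sub_apply, BR, LinearMap.coe_mk,
          AddHom.coe_mk]
        rw [leibniz_lie, ← lie_skew (CW m x) ⁅CW p x, x j⁆, sub_eq_add_neg]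
      rw [e]
      refine sub_mem ?_ ?_
      · have := mem_map_of_mem (f := BR j) (ih p hp)
        rw [map_span] at this
        refine span_mono ?_ this
        rintro _ ⟨_, ⟨m', hm', rfl⟩, rfl⟩
        exact ⟨m' ++ [j], hm'.append_right _, by rw [BR_CW _ (by simp [hp]), List.append_assoc]⟩
      · refine span_mono ?_ (ih (p ++ [j]) (by simp))
        rintro _ ⟨m', hm', rfl⟩
        refine ⟨j :: m', ?_, by simp⟩
        exact (hm'.cons j).trans (List.perm_append_singleton j m).symm

theorem lemB {n : ℕ} (i : Fin n) (l : List (Fin n)) (hi : i ∈ l) :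
    CW l ∈ span ℚ {f | ∃ l', (i :: l').Perm l ∧ f = CW (i :: l')} := by
  induction l using List.reverseRecOn with
  | nil => simp at hi
  | append_singleton l j ih =>
    by_cases h : i ∈ l
    · have := mem_map_of_mem (f := BR j) (ih h)
      rw [map_span, BR_CW l (List.ne_nil_of_mem h)] at this
      refine span_mono ?_ this
      rintro _ ⟨_, ⟨m', hm', rfl⟩, rfl⟩
      exact ⟨m' ++ [j], hm'.append_right [j], by rw [BR_CW _ (by simp)]; rfl⟩
    · have hj : i = j := by simpa [h] using hi
      subst hj
      by_cases hl : l = []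
      · subst hl
        exact subset_span ⟨[], by simp, rfl⟩
      · have e : CW (l ++ [i]) = -(fun x => ⁅CW [i] x, CW l x⁆) := by
          ext1 x
          rw [CW_append l hl, Pi.neg_apply, lie_skew]; rfl
        rw [e]
        refine neg_mem (span_mono ?_ (lemA l [i] (by simp)))
        rintro _ ⟨m', hm', rfl⟩
        exact ⟨m', (hm'.cons i).trans (List.perm_append_singleton i l).symm, rfl⟩

theorem IsK.foldl {κ : sl2 →ₗ[ℚ] sl2 →ₗ[ℚ] ℚ} (h : IsK κ) (r : List sl2) : ∀ y z : sl2,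
    κ (r.foldl (fun y z => ⁅y, z⁆) y) z
      = (-1) ^ r.length * κ (r.reverse.foldl (fun y z => ⁅y, z⁆) z) y := by
  induction r with
  | nil => intro y z; simp [h.symm y z]
  | cons a r ih =>
    intro y z
    rw [List.foldl_cons, ih, h.symm, h.inv, h.symm y, List.reverse_cons, List.foldl_append,
      List.length_cons, pow_succ]
    simp

/-- The form `κ(C(l), x_j)` as a linear function of `C(l)`. -/
def KW {n : ℕ} (κ : sl2 →ₗ[ℚ] sl2 →ₗ[ℚ] ℚ) (j : Fin n) :
    ((Fin n → sl2) → sl2) →ₗ[ℚ] ((Fin n → sl2) → ℚ) where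
  toFun f := fun x => κ (f x) (x j)
  map_add' f g := by ext1 x; simp
  map_smul' c f := by ext1 x; simp

theorem IsK.flipW {κ : sl2 →ₗ[ℚ] sl2 →ₗ[ℚ] ℚ} (h : IsK κ) {n : ℕ} (i j : Fin n)
    (r : List (Fin n)) :
    KW κ j (CW (i :: r)) = ((-1 : ℚ) ^ r.length) • KW κ i (CW (j :: r.reverse)) := by
  ext1 x
  simp only [KW, CW, lBrk, LinearMap.coe_mk, AddHom.coe_mk, List.map_cons, Pi.smul_apply,
    smul_eq_mul]
  rw [h.foldl]
  simp

/-- Moving one leg to the front. -/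
theorem KW_front {n : ℕ} (κ : sl2 →ₗ[ℚ] sl2 →ₗ[ℚ] ℚ) (i j : Fin n) (l : List (Fin n))
    (hi : i ∈ l) :
    KW κ j (CW l) ∈ span ℚ {f | ∃ l', (i :: l').Perm l ∧ f = KW κ j (CW (i :: l'))} := by
  have := mem_map_of_mem (f := KW κ j) (lemB i l hi)
  rw [map_span] at this
  refine span_mono ?_ this
  rintro _ ⟨_, ⟨m', hm', rfl⟩, rfl⟩
  exact ⟨m', hm', rfl⟩

theorem IsK.normal {κ : sl2 →ₗ[ℚ] sl2 →ₗ[ℚ] ℚ} (h : IsK κ) {n : ℕ} (a b : Fin n) (hab : a ≠ b)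
    (l : List (Fin n)) (j : Fin n) (hl : (j :: l).Perm (List.finRange n)) :
    KW κ j (CW l) ∈ span ℚ {f | ∃ q, (a :: b :: q).Perm (List.finRange n) ∧
      f = KW κ b (CW (a :: q))} := by
  have step : ∀ l : List (Fin n), (b :: l).Perm (List.finRange n) →
      KW κ b (CW l) ∈ span ℚ {f | ∃ q, (a :: b :: q).Perm (List.finRange n) ∧
      f = KW κ b (CW (a :: q))} := by
    intro l hl
    have ha : a ∈ b :: l := hl.symm.subset (List.mem_finRange a)
    have ha' : a ∈ l := by simpa [hab] using ha
    refine span_mono ?_ (KW_front κ a b l ha')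
    rintro _ ⟨q, hq, rfl⟩
    exact ⟨q, (List.Perm.swap b a q).trans ((hq.cons b).trans hl), rfl⟩
  by_cases hj : j = b
  · subst hj; exact step l hl
  · have hb : b ∈ j :: l := hl.symm.subset (List.mem_finRange b)
    have hb' : b ∈ l := by simpa [Ne.symm hj] using hb
    refine (span_le.2 ?_) (KW_front κ b j l hb')
    rintro _ ⟨r, hr, rfl⟩
    rw [h.flipW]
    refine smul_mem _ _ (step _ ?_)
    refine List.Perm.trans ?_ ((hr.cons j).trans hl)
    exact (((List.reverse_perm r).cons j).cons b).trans (List.Perm.swap j b r)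

/-- The standard comb forms. -/
def comb (κ : sl2 →ₗ[ℚ] sl2 →ₗ[ℚ] ℚ) (m : ℕ) (p : Equiv.Perm (Fin m)) :
    (Fin (m + 2) → sl2) → ℚ :=
  KW κ (Fin.last (m + 1)) (CW (0 :: List.ofFn (fun i => (p i).succ.castSucc)))

theorem exists_perm_of_list {m : ℕ} (q : List (Fin (m + 2)))
    (hq : (0 :: Fin.last (m + 1) :: q).Perm (List.finRange (m + 2))) :
    ∃ p : Equiv.Perm (Fin m), q = List.ofFn (fun i => (p i).succ.castSucc) := by
  have hnd := hq.nodup_iff.2 (List.nodup_finRange _)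
  have hlen : q.length = m := by simpa using hq.length_eq
  simp only [List.nodup_cons, List.mem_cons, not_or] at hnd
  obtain ⟨⟨-, h0⟩, hlast, hn⟩ := hnd
  have hex : ∀ i : Fin m, ∃ k : Fin m, q.get (i.cast hlen.symm) = k.succ.castSucc := by
    intro i
    have hi : q.get (i.cast hlen.symm) ∈ q := List.get_mem q _
    generalize q.get (i.cast hlen.symm) = v at hi
    cases v using Fin.lastCases with
    | last => exact absurd hi hlast
    | cast v =>
      cases v using Fin.cases with
      | zero => exact absurd hi h0
      | succ k => exact ⟨k, rfl⟩
  choose f hf using hex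
  have hinj : Function.Injective f := by
    intro i j hij
    have e : q.get (i.cast hlen.symm) = q.get (j.cast hlen.symm) := by rw [hf, hf, hij]
    have := List.nodup_iff_injective_get.1 hn e
    simpa [Fin.ext_iff] using this
  refine ⟨Equiv.ofBijective f (Finite.injective_iff_bijective.1 hinj), ?_⟩
  apply List.ext_getElem (by simp [hlen])
  intro i h1 h2
  rw [List.getElem_ofFn]
  exact hf ⟨i, by omega⟩

theorem brkVal_eq {n : ℕ} (κ : sl2 →ₗ[ℚ] sl2 →ₗ[ℚ] ℚ) (σ : Equiv.Perm (Fin (n + 1))) :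
    (fun x : Fin (n + 1) → sl2 => brkVal κ (x ∘ σ))
      = KW κ (σ (Fin.last n)) (CW (List.ofFn (fun i : Fin n => σ i.castSucc))) := by
  ext1 x
  have e : List.ofFn (x ∘ σ) = (List.ofFn (fun i : Fin n => σ i.castSucc)).map x
      ++ [x (σ (Fin.last n))] := by
    rw [List.ofFn_succ', List.concat_eq_append, List.map_ofFn]; rfl
  simp only [brkVal, e, KW, CW, LinearMap.coe_mk, AddHom.coe_mk]
  simp

theorem IsK.mem_comb {κ : sl2 →ₗ[ℚ] sl2 →ₗ[ℚ] ℚ} (h : IsK κ) (m : ℕ)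
    (σ : Equiv.Perm (Fin (m + 2))) :
    (fun x : Fin (m + 2) → sl2 => brkVal κ (x ∘ σ)) ∈ span ℚ (Set.range (comb κ m)) := by
  rw [brkVal_eq]
  refine span_mono ?_ (h.normal 0 (Fin.last (m + 1)) (by simp [Fin.ext_iff]) _ _ ?_)
  · rintro _ ⟨q, hq, rfl⟩
    obtain ⟨p, rfl⟩ := exists_perm_of_list q hq
    exact ⟨p, rfl⟩
  · have h1 := σ.ofFn_comp_perm (id : Fin (m + 2) → Fin (m + 2))
    rw [List.ofFn_id, List.ofFn_succ', List.concat_eq_append] at h1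
    exact (List.perm_append_singleton _ _).symm.trans h1

/-! ### The alternating relation -/

def adOp : sl2 →ₗ[ℚ] (Module.End ℚ sl2)ᵐᵒᵖ :=
  (MulOpposite.opLinearEquiv ℚ).toLinearMap ∘ₗ
    (-(LieAlgebra.ad ℚ sl2 : sl2 →ₗ[ℚ] Module.End ℚ sl2))

theorem adOp_foldl (l : List sl2) : ∀ y : sl2,
    l.foldl (fun y z => ⁅y, z⁆) y = (l.map adOp).prod.unop y := by
  induction l with
  | nil => intro y; simp
  | cons a l ih =>
    intro y
    rw [List.foldl_cons, ih, List.map_cons, List.prod_cons, MulOpposite.unop_mul,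
      Module.End.mul_apply]
    congr 1
    simp [adOp]

def multiAd (κ : sl2 →ₗ[ℚ] sl2 →ₗ[ℚ] ℚ) (m : ℕ) (y z : sl2) :
    MultilinearMap ℚ (fun _ : Fin m => sl2) ℚ :=
  (κ.flip z ∘ₗ LinearMap.applyₗ y ∘ₗ (MulOpposite.opLinearEquiv ℚ).symm.toLinearMap).compMultilinearMap
    ((MultilinearMap.mkPiAlgebraFin ℚ m (Module.End ℚ sl2)ᵐᵒᵖ).compLinearMap fun _ => adOp)

theorem multiAd_apply (κ : sl2 →ₗ[ℚ] sl2 →ₗ[ℚ] ℚ) (m : ℕ) (y z : sl2) (v : Fin m → sl2) :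
    multiAd κ m y z v = κ ((List.ofFn v).foldl (fun y z => ⁅y, z⁆) y) z := by
  rw [adOp_foldl, List.map_ofFn]
  rfl

theorem comb_rel (κ : sl2 →ₗ[ℚ] sl2 →ₗ[ℚ] ℚ) (m : ℕ) (hm : 4 ≤ m) :
    ∑ p : Equiv.Perm (Fin m), (((Equiv.Perm.sign p : ℤˣ) : ℤ) : ℚ) • comb κ m p = 0 := by
  ext1 x
  have h0 : MultilinearMap.alternatization (multiAd κ m (x 0) (x (Fin.last (m + 1))))
      (fun i : Fin m => x i.succ.castSucc) = 0 := by
    apply AlternatingMap.map_linearDependent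
    intro hli
    have := hli.fintype_card_le_finrank
    rw [finrank_sl2, Fintype.card_fin] at this
    omega
  rw [MultilinearMap.alternatization_apply] at h0
  rw [Finset.sum_apply, Pi.zero_apply, ← h0]
  refine Finset.sum_congr rfl fun p _ => ?_
  rw [MultilinearMap.domDomCongr_apply, multiAd_apply, Units.smul_def, zsmul_eq_mul,
    Pi.smul_apply, smul_eq_mul]
  congr 1
  simp only [comb, KW, CW, lBrk, LinearMap.coe_mk, AddHom.coe_mk, List.map_cons, List.map_ofFn]
  rfl

theorem comb_dep (κ : sl2 →ₗ[ℚ] sl2 →ₗ[ℚ] ℚ) (m : ℕ) (hm : 4 ≤ m) :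
    ¬ LinearIndependent ℚ (comb κ m) := by
  intro h
  have := Fintype.linearIndependent_iff.1 h _ (comb_rel κ m hm) 1
  simp at this

/-! ### Dimension counts -/

theorem IsK.finrank_le {κ : sl2 →ₗ[ℚ] sl2 →ₗ[ℚ] ℚ} (h : IsK κ) (m : ℕ)
    (t : Equiv.Perm (Fin (m + 2)) → TP (m + 2))
    (ht : ∀ σ (x : Fin (m + 2) → sl2), pairT κ (m + 2) x (t σ) = brkVal κ (x ∘ σ)) :
    Module.finrank ℚ (span ℚ (Set.range t)) ≤ (Set.range (comb κ m)).finrank ℚ := by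
  rw [(equivMapOfInjective (Phi κ (m + 2)) (h.Phi_inj _) (span ℚ (Set.range t))).finrank_eq]
  have : FiniteDimensional ℚ (span ℚ (Set.range (comb κ m))) :=
    FiniteDimensional.span_of_finite ℚ (Set.finite_range _)
  refine finrank_mono ?_
  rw [map_span, span_le]
  rintro _ ⟨_, ⟨σ, rfl⟩, rfl⟩
  have e : Phi κ (m + 2) (t σ) = fun x => brkVal κ (x ∘ σ) := by
    ext1 x; exact ht σ x
  rw [e]
  exact h.mem_comb m σ

theorem le_finrank {n k : ℕ} (t : Equiv.Perm (Fin n) → TP n)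
    (s : Fin k → Equiv.Perm (Fin n)) (hs : LinearIndependent ℚ (fun i => t (s i))) :
    k ≤ Module.finrank ℚ (span ℚ (Set.range t)) := by
  have : FiniteDimensional ℚ (span ℚ (Set.range t)) :=
    FiniteDimensional.span_of_finite ℚ (Set.finite_range _)
  have h1 := finrank_span_eq_card hs
  rw [Fintype.card_fin] at h1
  rw [← h1]
  refine finrank_mono (span_mono ?_)
  rintro _ ⟨i, rfl⟩
  exact ⟨s i, rfl⟩

theorem li_of_test {κ : sl2 →ₗ[ℚ] sl2 →ₗ[ℚ] ℚ} {n k : ℕ} (t : Equiv.Perm (Fin n) → TP n)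
    (ht : ∀ σ (x : Fin n → sl2), pairT κ n x (t σ) = brkVal κ (x ∘ σ))
    (s : Fin k → Equiv.Perm (Fin n))
    (hs : ∀ c : Fin k → ℚ, (∀ x : Fin n → sl2, ∑ i, c i * brkVal κ (x ∘ s i) = 0) → ∀ i, c i = 0) :
    LinearIndependent ℚ (fun i => t (s i)) := by
  rw [Fintype.linearIndependent_iff]
  intro c hc
  apply hs
  intro x
  have := congrArg (pairT κ n x) hc
  simpa [ht] using this

def s2 : Fin 1 → Equiv.Perm (Fin 2) := ![1]
def s3 : Fin 1 → Equiv.Perm (Fin 3) := ![1]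
def s4 : Fin 2 → Equiv.Perm (Fin 4) := ![1, ⟨![0,2,1,3], ![0,2,1,3], by decide, by decide⟩]
def s5 : Fin 6 → Equiv.Perm (Fin 5) :=
  ![1, ⟨![0,1,3,2,4], ![0,1,3,2,4], by decide, by decide⟩,
    ⟨![0,2,1,3,4], ![0,2,1,3,4], by decide, by decide⟩,
    ⟨![0,2,3,1,4], ![0,3,1,2,4], by decide, by decide⟩,
    ⟨![0,3,1,2,4], ![0,2,3,1,4], by decide, by decide⟩,
    ⟨![0,3,2,1,4], ![0,3,2,1,4], by decide, by decide⟩]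

theorem IsK.low2 {κ : sl2 →ₗ[ℚ] sl2 →ₗ[ℚ] ℚ} (h : IsK κ) (c : Fin 1 → ℚ)
    (hc : ∀ x : Fin 2 → sl2, ∑ i, c i * brkVal κ (x ∘ s2 i) = 0) : ∀ i, c i = 0 := by
  have h1 := hc ![E, F]
  simp [s2, brkVal, lBrk, h.hEF] at h1
  intro i; fin_cases i; exact h1

theorem IsK.low3 {κ : sl2 →ₗ[ℚ] sl2 →ₗ[ℚ] ℚ} (h : IsK κ) (c : Fin 1 → ℚ)
    (hc : ∀ x : Fin 3 → sl2, ∑ i, c i * brkVal κ (x ∘ s3 i) = 0) : ∀ i, c i = 0 := by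
  have h1 := hc ![E, F, H]
  simp [s3, brkVal, lBrk, brEF, h.hHH] at h1
  intro i; fin_cases i; exact h1

theorem IsK.low4 {κ : sl2 →ₗ[ℚ] sl2 →ₗ[ℚ] ℚ} (h : IsK κ) (c : Fin 2 → ℚ)
    (hc : ∀ x : Fin 4 → sl2, ∑ i, c i * brkVal κ (x ∘ s4 i) = 0) : ∀ i, c i = 0 := by
  have h1 := hc ![E, E, F, F]
  have h2 := hc ![E, F, E, F]
  simp [s4, brkVal, lBrk, brEF, brHE, brHF, brFE, brEH, brFH, h.hEF, Fin.sum_univ_succ] at h1 h2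
  intro i; fin_cases i
  · exact h2
  · exact h1

theorem IsK.low5 {κ : sl2 →ₗ[ℚ] sl2 →ₗ[ℚ] ℚ} (h : IsK κ) (c : Fin 6 → ℚ)
    (hc : ∀ x : Fin 5 → sl2, ∑ i, c i * brkVal κ (x ∘ s5 i) = 0) : ∀ i, c i = 0 := by
  have h1 := hc ![E, E, F, H, F]
  have h2 := hc ![E, E, H, F, F]
  have h3 := hc ![E, F, E, H, F]
  have h4 := hc ![E, F, H, E, F]
  have h5 := hc ![E, F, H, H, H]
  have h6 := hc ![E, H, E, F, F]
  simp [s5, brkVal, lBrk, brEF, brHE, brHF, brFE, brEH, brFH, h.hEF, h.hHH, Fin.sum_univ_six]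
    at h1 h2 h3 h4 h5 h6
  intro i; fin_cases i <;> simp <;> linarith

theorem span_linear_tree_tensors_finrank_iff
    (κ : sl2 →ₗ[ℚ] sl2 →ₗ[ℚ] ℚ)
    (hHH : κ H H = 2) (hEF : κ E F = 1) (hFE : κ F E = 1)
    (hHE : κ H E = 0) (hEH : κ E H = 0) (hHF : κ H F = 0) (hFH : κ F H = 0)
    (hEE : κ E E = 0) (hFF : κ F F = 0) :
    ∀ n, 2 ≤ n →
    ∀ t : Equiv.Perm (Fin n) → TP n,
      (∀ σ (x : Fin n → sl2), pairT κ n x (t σ) = brkVal κ (x ∘ σ)) →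
      (Module.finrank ℚ (Submodule.span ℚ (Set.range t)) = Nat.factorial (n - 2)
        ↔ n ≤ 5) := by
  have h : IsK κ := ⟨hHH, hEF, hFE, hHE, hEH, hHF, hFH, hEE, hFF⟩
  intro n hn t ht
  obtain ⟨m, rfl⟩ : ∃ m, n = m + 2 := ⟨n - 2, by omega⟩
  have hle := h.finrank_le m t ht
  have hcard : Fintype.card (Equiv.Perm (Fin m)) = m.factorial := by
    rw [Fintype.card_perm, Fintype.card_fin]
  have hle2 : (Set.range (comb κ m)).finrank ℚ ≤ m.factorial :=
    hcard ▸ finrank_range_le_card (comb κ m)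
  rw [Nat.add_sub_cancel]
  constructor
  · intro heq
    by_contra hcon
    have hdep := comb_dep κ m (by omega)
    rw [linearIndependent_iff_card_le_finrank_span, hcard] at hdep
    omega
  · intro hm
    refine le_antisymm (hle.trans hle2) ?_
    have hm' : m ≤ 3 := by omega
    interval_cases m
    · exact le_finrank t s2 (li_of_test t ht s2 h.low2)
    · exact le_finrank t s3 (li_of_test t ht s3 h.low3)
    · exact le_finrank t s4 (li_of_test t ht s4 h.low4)
    · exact le_finrank t s5 (li_of_test t ht s5 h.low5)
end
end

section
/- For n = 2 and for every odd n ≥ 3, the ℚ-linear span of {t_σ : σ ∈ Sₙ} equals all of Inv(sl₂^{⊗n}). (Equivalently, the homotopy sl₂ weight system W^h_n : 𝒞ₙ → Inv(sl₂^{⊗n}) is surjective for n odd and for n = 2.) -/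
/- Surjectivity of the homotopy sl₂ weight system for n = 2 and n odd:
   the ℚ-span of the tensors t_σ (σ ∈ Sₙ) — the κ-duals of the permuted
   iterated-bracket forms — equals all of Inv(sl₂^{⊗n}) when n = 2 or
   n ≥ 3 is odd.  κ and the family t are quantified via their defining
   properties. -/

open scoped TensorProduct

set_option synthInstance.maxHeartbeats 1000000
set_option maxHeartbeats 1000000

noncomputable section

abbrev RR : Type := MvPolynomial (ℕ × Fin 3) ℚ

def br {S : Type} [CommRing S] (u v : Fin 3 → S) : Fin 3 → S :=
  ![u 0 * v 1 - u 1 * v 0, 2 * (u 2 * v 0 - u 0 * v 2), u 1 * v 2 - u 2 * v 1]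

def kp {S : Type} [CommRing S] [Algebra ℚ S] (u v : Fin 3 → S) : S :=
  u 0 * v 2 + u 2 * v 0 + (1 / 2 : ℚ) • (u 1 * v 1)

def gg (i : ℕ) : Fin 3 → RR := fun a => MvPolynomial.X (i, a)

def LL : List ℕ → (Fin 3 → RR)
  | [] => 0
  | a :: l => l.foldl (fun y z => br y (gg z)) (gg a)

theorem LL_append (w : List ℕ) (hw : w ≠ []) (m : ℕ) : LL (w ++ [m]) = br (LL w) (gg m) := by
  cases w with
  | nil => exact absurd rfl hw
  | cons a l => simp [LL]

def DE : Derivation ℚ RR RR :=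
  MvPolynomial.mkDerivation ℚ fun p => (![0, -2 * gg p.1 0, gg p.1 1] : Fin 3 → RR) p.2
def DH : Derivation ℚ RR RR :=
  MvPolynomial.mkDerivation ℚ fun p => (![2 * gg p.1 0, 0, -2 * gg p.1 2] : Fin 3 → RR) p.2
def DF : Derivation ℚ RR RR :=
  MvPolynomial.mkDerivation ℚ fun p => (![- gg p.1 1, 2 * gg p.1 2, 0] : Fin 3 → RR) p.2

structure Eqv (W : Fin 3 → RR) : Prop where
  e0 : DE (W 0) = 0
  e1 : DE (W 1) = -2 * W 0
  e2 : DE (W 2) = W 1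
  h0 : DH (W 0) = 2 * W 0
  h1 : DH (W 1) = 0
  h2 : DH (W 2) = -2 * W 2
  f0 : DF (W 0) = - W 1
  f1 : DF (W 1) = 2 * W 2
  f2 : DF (W 2) = 0

theorem eqv_gg (i : ℕ) : Eqv (gg i) := by
  constructor <;> simp [DE, DH, DF, gg, MvPolynomial.mkDerivation_X]

theorem der_two (D : Derivation ℚ RR RR) : D 2 = 0 := by
  have := D.map_natCast 2
  simpa using this

theorem eqv_br {U V : Fin 3 → RR} (hU : Eqv U) (hV : Eqv V) : Eqv (br U V) := by
  constructor <;> simp only [br, Matrix.cons_val_zero, Matrix.cons_val_one, Matrix.cons_val, map_sub,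
    Derivation.leibniz, smul_eq_mul, hU.e0, hU.e1, hU.e2, hU.h0, hU.h1, hU.h2, hU.f0, hU.f1, hU.f2,
    hV.e0, hV.e1, hV.e2, hV.h0, hV.h1, hV.h2, hV.f0, hV.f1, hV.f2, der_two] <;> ring

theorem eqv_zero : Eqv 0 := by
  constructor <;> simp

theorem eqv_LL (w : List ℕ) : Eqv (LL w) := by
  induction w using List.reverseRecOn with
  | nil => exact eqv_zero
  | append_singleton l a ih =>
    by_cases h : l = []
    · subst h; exact eqv_gg a
    · rw [LL_append _ h]; exact eqv_br ih (eqv_gg a)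

theorem smul_half (x : RR) : (1 / 2 : ℚ) • (2 * x) = x := by
  rw [two_mul, ← two_smul ℚ x, smul_smul]; norm_num

theorem kp_inv {U V : Fin 3 → RR} (hU : Eqv U) (hV : Eqv V) :
    DE (kp U V) = 0 ∧ DH (kp U V) = 0 ∧ DF (kp U V) = 0 := by
  refine ⟨?_, ?_, ?_⟩ <;> simp only [kp, map_add, Derivation.map_smul,
    Derivation.leibniz, smul_eq_mul, hU.e0, hU.e1, hU.e2, hU.h0, hU.h1, hU.h2, hU.f0, hU.f1, hU.f2,
    hV.e0, hV.e1, hV.e2, hV.h0, hV.h1, hV.h2, hV.f0, hV.f1, hV.f2]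
  · rw [show U 1 * (-2 * V 0) + V 1 * (-2 * U 0) = 2 * (-(U 1 * V 0 + V 1 * U 0)) by ring, smul_half]
    ring
  · simp; ring
  · rw [show U 1 * (2 * V 2) + V 1 * (2 * U 2) = 2 * ((U 1 * V 2 + V 1 * U 2)) by ring, smul_half]
    ring

theorem comm_EF (P : RR) : DE (DF P) - DF (DE P) = DH P := by
  have : ⁅DE, DF⁆ = DH := by
    apply MvPolynomial.derivation_ext
    rintro ⟨i, a⟩
    have g := eqv_gg i
    rw [Derivation.commutator_apply]
    change DE (DF (gg i a)) - DF (DE (gg i a)) = DH (gg i a)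
    fin_cases a <;> simp [g.e0, g.e1, g.e2, g.f0, g.f1, g.f2, g.h0, g.h1, g.h2, der_two]
  rw [← this, Derivation.commutator_apply]

theorem comm_HF (P : RR) : DH (DF P) - DF (DH P) = -2 * DF P := by
  have : ⁅DH, DF⁆ = (-2 : RR) • DF := by
    apply MvPolynomial.derivation_ext
    rintro ⟨i, a⟩
    have g := eqv_gg i
    rw [Derivation.commutator_apply]
    change DH (DF (gg i a)) - DF (DH (gg i a)) = -2 * DF (gg i a)
    fin_cases a <;> simp [g.f0, g.f1, g.f2, g.h0, g.h1, g.h2, der_two]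
  rw [← Derivation.commutator_apply, this]; simp

theorem nil_mul (D : Derivation ℚ RR RR) : ∀ (s N M : ℕ), N + M = s → ∀ P Q : RR,
    D^[N] P = 0 → D^[M] Q = 0 → D^[s] (P * Q) = 0 := by
  have hz : ∀ k, D^[k] (0 : RR) = 0 := fun k => Function.iterate_fixed (map_zero D) k
  have hadd : ∀ k (a b : RR), D^[k] (a + b) = D^[k] a + D^[k] b := by
    intro k; induction k with
    | zero => simp
    | succ k ih => intro a b; simp [Function.iterate_succ]
  intro s
  induction s with
  | zero =>
    intro N M h P Q hP hQ
    obtain rfl : N = 0 := by omega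
    simp at hP; simp [hP]
  | succ s ih =>
    intro N M h P Q hP hQ
    rcases N with _ | N
    · simp only [Function.iterate_zero, id] at hP; rw [hP, zero_mul, hz]
    rcases M with _ | M
    · simp only [Function.iterate_zero, id] at hQ; rw [hQ, mul_zero, hz]
    rw [Function.iterate_succ_apply, Derivation.leibniz, hadd]
    rw [smul_eq_mul, smul_eq_mul, ih (N+1) M (by omega) _ _ hP (by simpa using hQ),
      ih (M+1) N (by omega) _ _ hQ (by simpa using hP), add_zero]

theorem nil_F (P : RR) : ∃ N, DF^[N] P = 0 := by
  have hz : ∀ k, DF^[k] (0 : RR) = 0 := fun k => Function.iterate_fixed (map_zero DF) k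
  have hadd : ∀ k (a b : RR), DF^[k] (a + b) = DF^[k] a + DF^[k] b := by
    intro k; induction k with
    | zero => simp
    | succ k ih => intro a b; simp [Function.iterate_succ]
  have hle : ∀ (N M : ℕ) (P : RR), DF^[N] P = 0 → DF^[M + N] P = 0 := by
    intro N M P h; rw [Function.iterate_add_apply, h, hz]
  induction P using MvPolynomial.induction_on with
  | C a => exact ⟨1, by simp⟩
  | add p q hp hq =>
    obtain ⟨N, hN⟩ := hp
    obtain ⟨M, hM⟩ := hq
    refine ⟨M + N, ?_⟩
    rw [hadd, hle _ _ _ hN, add_comm M N, hle _ _ _ hM, add_zero]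
  | mul_X p n hp =>
    obtain ⟨N, hN⟩ := hp
    refine ⟨N + 3, nil_mul DF _ N 3 rfl _ _ hN ?_⟩
    obtain ⟨i, a⟩ := n
    change DF^[3] (gg i a) = 0
    have g := eqv_gg i
    fin_cases a <;> simp [g.f0, g.f1, g.f2, der_two]

theorem hw_zero_inv (P : RR) (hE : DE P = 0) (hH : DH P = 0) : DF P = 0 := by
  have h1 : ∀ j : ℕ, DH (DF^[j] P) = -2 * j * DF^[j] P := by
    intro j; induction j with
    | zero => simp [hH]
    | succ j ih =>
      rw [Function.iterate_succ_apply']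
      have := comm_HF (DF^[j] P)
      rw [ih] at this
      have h3 : DF (-2 * (j : RR) * DF^[j] P) = -2 * (j : RR) * DF (DF^[j] P) := by
        simp [Derivation.leibniz, der_two]
      rw [h3] at this
      push_cast
      linear_combination this
  have h2 : ∀ j : ℕ, DE (DF^[j+1] P) = -((j : RR) * (j + 1)) * DF^[j] P := by
    intro j; induction j with
    | zero =>
      have := comm_EF P
      simp [hE, hH] at this; simp [this]
    | succ j ih =>
      have := comm_EF (DF^[j+1] P)
      rw [ih, h1, ← Function.iterate_succ_apply' (⇑DF)] at this
      have h3 : DF (-((j : RR) * (j + 1)) * DF^[j] P) = -((j : RR) * (j + 1)) * DF^[j+1] P := by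
        rw [Function.iterate_succ_apply']
        simp [Derivation.leibniz]
      rw [h3] at this
      push_cast at this ⊢
      linear_combination this
  have key : ∀ N, DF^[N+1] P = 0 → DF P = 0 := by
    intro N; induction N with
    | zero => simp
    | succ N ih =>
      intro h
      apply ih
      have h4 := h2 (N+1)
      rw [h, map_zero] at h4
      have h5 : (-(((N+1 : ℕ) : RR) * ((N+1 : ℕ) + 1))) ≠ 0 := by
        rw [neg_ne_zero]
        exact_mod_cast (by positivity : (N+1)*(N+1+1) ≠ 0)
      exact (mul_eq_zero.1 h4.symm).resolve_left h5
  obtain ⟨N, hN⟩ := nil_F P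
  apply key N
  rw [Function.iterate_succ_apply', hN, map_zero]

def wt : ℕ × Fin 3 → (ℕ →₀ ℕ) := fun p => Finsupp.single p.1 1

def dg (l : List ℕ) : ℕ →₀ ℕ := (l.map fun i => Finsupp.single i 1).sum

theorem dg_perm {l l' : List ℕ} (h : l.Perm l') : dg l = dg l' := (h.map _).sum_eq

theorem dg_append (l l' : List ℕ) : dg (l ++ l') = dg l + dg l' := by simp [dg]

theorem dg_single (i : ℕ) : dg [i] = Finsupp.single i 1 := by simp [dg]

def Hom (l : List ℕ) : Submodule ℚ RR := MvPolynomial.weightedHomogeneousSubmodule ℚ wt (dg l)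

theorem Hom_perm {l l' : List ℕ} (h : l.Perm l') : Hom l = Hom l' := by
  rw [Hom, Hom, dg_perm h]

theorem Hom_mul {l l' : List ℕ} {P Q : RR} (hP : P ∈ Hom l) (hQ : Q ∈ Hom l') :
    P * Q ∈ Hom (l ++ l') := by
  rw [Hom, dg_append]
  exact MvPolynomial.IsWeightedHomogeneous.mul hP hQ

theorem Hom_one : (1 : RR) ∈ Hom [] := MvPolynomial.isWeightedHomogeneous_one ℚ wt

theorem Hom_gg (i : ℕ) (a : Fin 3) : gg i a ∈ Hom [i] := by
  rw [Hom, dg_single]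
  exact MvPolynomial.isWeightedHomogeneous_X ℚ wt (i, a)

theorem Hom_two_mul {l : List ℕ} {P : RR} (h : P ∈ Hom l) : 2 * P ∈ Hom l := by
  rw [two_mul]; exact add_mem h h

theorem Hom_br {l l' : List ℕ} {U V : Fin 3 → RR} (hU : ∀ a, U a ∈ Hom l) (hV : ∀ a, V a ∈ Hom l')
    (a : Fin 3) : br U V a ∈ Hom (l ++ l') := by
  fin_cases a
  · exact sub_mem (Hom_mul (hU _) (hV _)) (Hom_mul (hU _) (hV _))
  · exact Hom_two_mul (sub_mem (Hom_mul (hU _) (hV _)) (Hom_mul (hU _) (hV _)))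
  · exact sub_mem (Hom_mul (hU _) (hV _)) (Hom_mul (hU _) (hV _))

theorem Hom_kp {l l' : List ℕ} {U V : Fin 3 → RR} (hU : ∀ a, U a ∈ Hom l) (hV : ∀ a, V a ∈ Hom l') :
    kp U V ∈ Hom (l ++ l') :=
  add_mem (add_mem (Hom_mul (hU _) (hV _)) (Hom_mul (hU _) (hV _)))
    (Submodule.smul_mem _ _ (Hom_mul (hU _) (hV _)))

theorem Hom_LL (w : List ℕ) (a : Fin 3) : LL w a ∈ Hom w := by
  induction w using List.reverseRecOn generalizing a with
  | nil => exact zero_mem _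
  | append_singleton l b ih =>
    by_cases h : l = []
    · subst h; exact Hom_gg b a
    · rw [LL_append _ h]; exact Hom_br ih (Hom_gg b) a

def MM (m : ℕ) : Submodule ℚ RR := Hom (List.range m)

theorem MM_mul_gg {m : ℕ} {A : RR} (hA : A ∈ MM m) (a : Fin 3) : A * gg m a ∈ MM (m + 1) := by
  rw [MM, List.range_succ]; exact Hom_mul hA (Hom_gg m a)

theorem dg_range_apply_self (m : ℕ) : dg (List.range m) m = 0 := by
  have : ∀ k, k ≤ m → dg (List.range k) m = 0 := by
    intro k; induction k with
    | zero => simp [dg]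
    | succ k ih =>
      intro h
      rw [List.range_succ, dg_append, dg_single, Finsupp.add_apply, ih (by omega),
        Finsupp.single_apply, if_neg (by omega), add_zero]
  exact this m le_rfl

theorem MM_dec {m : ℕ} {P : RR} (h : P ∈ MM (m + 1)) : ∃ A ∈ MM m, ∃ B ∈ MM m, ∃ K ∈ MM m,
    P = A * gg m 0 + B * gg m 1 + K * gg m 2 := by
  have hmon : ∀ d ∈ P.support, ∃ A ∈ MM m, ∃ B ∈ MM m, ∃ K ∈ MM m,
      MvPolynomial.monomial d (P.coeff d) = A * gg m 0 + B * gg m 1 + K * gg m 2 := by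
    intro d hd
    have hw : Finsupp.weight wt d = dg (List.range m) + Finsupp.single m 1 := by
      rw [← dg_single, ← dg_append, ← List.range_succ]
      exact h (MvPolynomial.mem_support_iff.1 hd)
    have hex : ∃ a : Fin 3, d (m, a) ≠ 0 := by
      by_contra hcon
      push Not at hcon
      have h1 : Finsupp.weight wt d m = 0 := by
        rw [Finsupp.weight_apply, Finsupp.sum, Finsupp.finsetSum_apply]
        apply Finset.sum_eq_zero
        rintro ⟨i, a⟩ _
        by_cases hi : i = m
        · subst hi; simp [hcon a]
        · simp [wt, hi]
      rw [hw, Finsupp.add_apply, dg_range_apply_self] at h1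
      simp at h1
    obtain ⟨a, ha⟩ := hex
    have h2 := Finsupp.weight_sub_single_add (w := wt) ha
    rw [hw] at h2
    have h3 : Finsupp.weight wt (d - Finsupp.single (m, a) 1) = dg (List.range m) :=
      add_right_cancel h2
    have h4 : MvPolynomial.monomial (d - Finsupp.single (m, a) 1) (P.coeff d) ∈ MM m :=
      MvPolynomial.isWeightedHomogeneous_monomial wt _ _ h3
    have h5 : MvPolynomial.monomial d (P.coeff d) =
        MvPolynomial.monomial (d - Finsupp.single (m, a) 1) (P.coeff d) * gg m a := by
      rw [gg, MvPolynomial.X, MvPolynomial.monomial_mul, mul_one,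
        Finsupp.sub_add_single_one_cancel ha]
    rw [h5]
    fin_cases a
    · exact ⟨_, h4, 0, zero_mem _, 0, zero_mem _, by simp⟩
    · exact ⟨0, zero_mem _, _, h4, 0, zero_mem _, by simp⟩
    · exact ⟨0, zero_mem _, 0, zero_mem _, _, h4, by simp⟩
  choose! A hA B hB K hK hP using hmon
  refine ⟨∑ d ∈ P.support, A d, sum_mem hA, ∑ d ∈ P.support, B d, sum_mem hB,
    ∑ d ∈ P.support, K d, sum_mem hK, ?_⟩
  conv_lhs => rw [P.as_sum]
  rw [Finset.sum_congr rfl hP, Finset.sum_add_distrib, Finset.sum_add_distrib, Finset.sum_mul,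
    Finset.sum_mul, Finset.sum_mul]

theorem MM_zero {P : RR} (h : P ∈ MM 0) : ∃ c : ℚ, P = MvPolynomial.C c := by
  refine ⟨P.coeff 0, ?_⟩
  ext d
  rw [MvPolynomial.coeff_C]
  split_ifs with hd
  · rw [hd]
  · by_contra hc
    have hw : Finsupp.weight wt d = 0 := h hc
    apply hd
    symm
    ext ⟨i, a⟩
    by_contra hne
    have h2 := Finsupp.weight_sub_single_add (w := wt) hne
    rw [hw] at h2
    have h3 := DFunLike.congr_fun h2 i
    simp [wt] at h3

theorem MM_pderiv {m : ℕ} {P : RR} (h : P ∈ MM m) (j : ℕ) (hj : m ≤ j) (a : Fin 3) :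
    MvPolynomial.pderiv (j, a) P = 0 := by
  induction m generalizing P with
  | zero => obtain ⟨c, rfl⟩ := MM_zero h; simp
  | succ m ih =>
    obtain ⟨A, hA, B, hB, K, hK, rfl⟩ := MM_dec h
    have hg : ∀ b, MvPolynomial.pderiv (j, a) (gg m b) = 0 := by
      intro b
      rw [gg, MvPolynomial.pderiv_X_of_ne]
      intro h; have := congrArg Prod.fst h; simp at this; omega
    simp [Derivation.leibniz, hg, ih hA (by omega), ih hB (by omega), ih hK (by omega)]

theorem MM_uniq {m : ℕ} {A B K : RR} (hA : A ∈ MM m) (hB : B ∈ MM m) (hK : K ∈ MM m)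
    (h : A * gg m 0 + B * gg m 1 + K * gg m 2 = 0) : A = 0 ∧ B = 0 ∧ K = 0 := by
  have h1 : ∀ a, MvPolynomial.pderiv (m, a) (A * gg m 0 + B * gg m 1 + K * gg m 2) = 0 := by
    intro a; rw [h, map_zero]
  simp only [map_add, Derivation.leibniz, MM_pderiv hA m le_rfl, MM_pderiv hB m le_rfl,
    MM_pderiv hK m le_rfl, gg, MvPolynomial.pderiv_X, smul_zero, add_zero] at h1
  refine ⟨?_, ?_, ?_⟩
  · simpa [Pi.single_apply] using h1 0
  · simpa [Pi.single_apply] using h1 1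
  · simpa [Pi.single_apply] using h1 2

theorem MM_der (D : Derivation ℚ RR RR) (hD : ∀ i a, D (gg i a) ∈ Hom [i]) {m : ℕ} {P : RR}
    (h : P ∈ MM m) : D P ∈ MM m := by
  induction m generalizing P with
  | zero => obtain ⟨c, rfl⟩ := MM_zero h; simp
  | succ m ih =>
    obtain ⟨A, hA, B, hB, K, hK, rfl⟩ := MM_dec h
    have key : ∀ A ∈ MM m, ∀ a, D (A * gg m a) ∈ MM (m + 1) := by
      intro A hA a
      rw [Derivation.leibniz, smul_eq_mul, smul_eq_mul]
      refine add_mem ?_ ?_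
      · rw [MM, List.range_succ]; exact Hom_mul hA (hD m a)
      · rw [mul_comm]; exact MM_mul_gg (ih hA) a
    rw [map_add, map_add]
    exact add_mem (add_mem (key _ hA _) (key _ hB _)) (key _ hK _)

theorem Hom_int {l : List ℕ} {P : RR} (h : P ∈ Hom l) : -2 * P ∈ Hom l := by
  rw [neg_mul]; exact neg_mem (Hom_two_mul h)

theorem MM_DE {m : ℕ} {P : RR} (h : P ∈ MM m) : DE P ∈ MM m := by
  apply MM_der _ _ h
  intro i a
  have g := eqv_gg i
  fin_cases a
  · change DE (gg i 0) ∈ _; rw [g.e0]; exact zero_mem _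
  · change DE (gg i 1) ∈ _; rw [g.e1]; exact Hom_int (Hom_gg _ _)
  · change DE (gg i 2) ∈ _; rw [g.e2]; exact (Hom_gg _ _)

theorem MM_DH {m : ℕ} {P : RR} (h : P ∈ MM m) : DH P ∈ MM m := by
  apply MM_der _ _ h
  intro i a
  have g := eqv_gg i
  fin_cases a
  · change DH (gg i 0) ∈ _; rw [g.h0]; exact Hom_two_mul (Hom_gg _ _)
  · change DH (gg i 1) ∈ _; rw [g.h1]; exact zero_mem _
  · change DH (gg i 2) ∈ _; rw [g.h2]; exact Hom_int (Hom_gg _ _)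

theorem MM_DF {m : ℕ} {P : RR} (h : P ∈ MM m) : DF P ∈ MM m := by
  apply MM_der _ _ h
  intro i a
  have g := eqv_gg i
  fin_cases a
  · change DF (gg i 0) ∈ _; rw [g.f0]; exact neg_mem (Hom_gg _ _)
  · change DF (gg i 1) ∈ _; rw [g.f1]; exact Hom_two_mul (Hom_gg _ _)
  · change DF (gg i 2) ∈ _; rw [g.f2]; exact zero_mem _

def bprod (bs : List (List ℕ × ℕ)) : RR := (bs.map fun b => kp (LL b.1) (gg b.2)).prod
def wprod (ws : List (List ℕ)) : RR := (ws.map fun w => LL w 0).prod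
def bidx (bs : List (List ℕ × ℕ)) : List ℕ := (bs.map fun b => b.1 ++ [b.2]).flatten

def GS (k m : ℕ) : Set RR := {P | ∃ (bs : List (List ℕ × ℕ)) (ws : List (List ℕ)),
  ws.length = k ∧ (∀ b ∈ bs, b.1 ≠ []) ∧ (∀ w ∈ ws, w ≠ []) ∧
  (bidx bs ++ ws.flatten).Perm (List.range m) ∧ P = bprod bs * wprod ws}

def GG (k m : ℕ) : Submodule ℚ RR := Submodule.span ℚ (GS k m)

theorem bprod_hom (bs : List (List ℕ × ℕ)) : bprod bs ∈ Hom (bidx bs) := by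
  induction bs with
  | nil => exact Hom_one
  | cons b bs ih =>
    have := Hom_mul (Hom_kp (Hom_LL b.1) (Hom_gg b.2)) ih
    simpa [bprod, bidx] using this

theorem wprod_hom (ws : List (List ℕ)) : wprod ws ∈ Hom ws.flatten := by
  induction ws with
  | nil => exact Hom_one
  | cons b bs ih =>
    have := Hom_mul (Hom_LL b 0) ih
    simpa [wprod] using this

theorem bprod_inv (bs : List (List ℕ × ℕ)) :
    DE (bprod bs) = 0 ∧ DH (bprod bs) = 0 ∧ DF (bprod bs) = 0 := by
  induction bs with
  | nil => simp [bprod]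
  | cons b bs ih =>
    have h := kp_inv (eqv_LL b.1) (eqv_gg b.2)
    have e : bprod (b :: bs) = kp (LL b.1) (gg b.2) * bprod bs := by simp [bprod]
    rw [e]
    simp [Derivation.leibniz, h.1, h.2.1, h.2.2, ih.1, ih.2.1, ih.2.2]

theorem wprod_hw (ws : List (List ℕ)) :
    DE (wprod ws) = 0 ∧ DH (wprod ws) = 2 * (ws.length : RR) * wprod ws := by
  induction ws with
  | nil => simp [wprod]
  | cons b bs ih =>
    have h := eqv_LL b
    have e : wprod (b :: bs) = LL b 0 * wprod bs := by simp [wprod]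
    rw [e]
    refine ⟨by simp [Derivation.leibniz, h.e0, ih.1], ?_⟩
    rw [Derivation.leibniz, h.h0, ih.2, smul_eq_mul, smul_eq_mul, List.length_cons]
    push_cast
    ring

theorem GG_hw {k m : ℕ} {P : RR} (h : P ∈ GG k m) : P ∈ MM m ∧ DE P = 0 ∧ DH P = 2 * (k : RR) * P := by
  induction h using Submodule.span_induction with
  | mem P hP =>
    obtain ⟨bs, ws, rfl, -, -, hp, rfl⟩ := hP
    refine ⟨?_, ?_, ?_⟩
    · rw [MM, ← Hom_perm hp]; exact Hom_mul (bprod_hom _) (wprod_hom _)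
    · simp [Derivation.leibniz, (bprod_inv bs).1, (wprod_hw ws).1]
    · rw [Derivation.leibniz, (bprod_inv bs).2.1, (wprod_hw ws).2, smul_eq_mul, smul_eq_mul]; ring
  | zero => simp
  | add x y _ _ hx hy =>
    refine ⟨add_mem hx.1 hy.1, by rw [map_add, hx.2.1, hy.2.1, add_zero], ?_⟩
    rw [map_add, hx.2.2, hy.2.2]; ring
  | smul c x _ hx =>
    refine ⟨Submodule.smul_mem _ _ hx.1, by rw [Derivation.map_smul, hx.2.1, smul_zero], ?_⟩
    rw [Derivation.map_smul, hx.2.2, mul_smul_comm]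

theorem ext_K {k m : ℕ} {K : RR} (h : K ∈ GG (k + 1) m) : ∃ T ∈ GG k (m + 1), ∃ A ∈ MM m, ∃ B ∈ MM m,
    T = A * gg m 0 + B * gg m 1 + K * gg m 2 := by
  induction h using Submodule.span_induction with
  | mem P hP =>
    obtain ⟨bs, ws, hk, hb, hw, hp, rfl⟩ := hP
    rcases ws with _ | ⟨w, ws⟩
    · simp at hk
    have hom : ∀ a, bprod bs * (LL w a * wprod ws) ∈ MM m := by
      intro a
      rw [MM, ← Hom_perm hp]
      exact Hom_mul (bprod_hom _) (Hom_mul (Hom_LL _ _) (wprod_hom _))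
    refine ⟨bprod ((w, m) :: bs) * wprod ws, Submodule.subset_span ⟨(w, m) :: bs, ws, ?_, ?_, ?_, ?_, rfl⟩,
      _, hom 2, _, Submodule.smul_mem _ (1 / 2 : ℚ) (hom 1), ?_⟩
    · simpa using hk
    · intro b hb'
      rcases List.mem_cons.1 hb' with rfl | h
      · exact hw w (by simp)
      · exact hb b h
    · exact fun w' h => hw w' (List.mem_cons_of_mem _ h)
    · rw [List.range_succ]
      refine List.Perm.trans ?_ (hp.append_right [m])
      rw [List.perm_iff_count]; intro a
      simp [bidx, List.count_append, List.count_cons]; omega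
    · simp only [bprod, wprod, List.map_cons, List.prod_cons, kp, smul_mul_assoc, add_mul]
      simp only [Algebra.smul_def]
      ring
  | zero => exact ⟨0, zero_mem _, 0, zero_mem _, 0, zero_mem _, by simp⟩
  | add x y _ _ hx hy =>
    obtain ⟨T, hT, A, hA, B, hB, e⟩ := hx
    obtain ⟨T', hT', A', hA', B', hB', e'⟩ := hy
    exact ⟨T + T', add_mem hT hT', A + A', add_mem hA hA', B + B', add_mem hB hB', by
      rw [e, e']; ring⟩
  | smul c x _ hx =>
    obtain ⟨T, hT, A, hA, B, hB, e⟩ := hx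
    exact ⟨c • T, Submodule.smul_mem _ _ hT, c • A, Submodule.smul_mem _ _ hA,
      c • B, Submodule.smul_mem _ _ hB, by rw [e]; simp only [smul_add, smul_mul_assoc]⟩

theorem ext_B {k m : ℕ} {K : RR} (h : K ∈ GG (k + 1) m) : ∃ T ∈ GG (k + 1) (m + 1), ∃ A ∈ MM m,
    T = A * gg m 0 + K * gg m 1 := by
  induction h using Submodule.span_induction with
  | mem P hP =>
    obtain ⟨bs, ws, hk, hb, hw, hp, rfl⟩ := hP
    rcases ws with _ | ⟨w, ws⟩
    · simp at hk
    have hom : ∀ a, bprod bs * (LL w a * wprod ws) ∈ MM m := by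
      intro a
      rw [MM, ← Hom_perm hp]
      exact Hom_mul (bprod_hom _) (Hom_mul (Hom_LL _ _) (wprod_hom _))
    refine ⟨bprod bs * wprod ((w ++ [m]) :: ws),
      Submodule.subset_span ⟨bs, (w ++ [m]) :: ws, ?_, hb, ?_, ?_, rfl⟩,
      _, neg_mem (hom 1), ?_⟩
    · simpa using hk
    · intro b hb'
      rcases List.mem_cons.1 hb' with rfl | h
      · simp
      · exact hw b (List.mem_cons_of_mem _ h)
    · rw [List.range_succ]
      refine List.Perm.trans ?_ (hp.append_right [m])
      rw [List.perm_iff_count]; intro a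
      simp [bidx, List.count_append, List.count_cons]
    · simp only [wprod, List.map_cons, List.prod_cons, LL_append w (hw w (by simp)), br,
        Matrix.cons_val_zero]
      ring
  | zero => exact ⟨0, zero_mem _, 0, zero_mem _, by simp⟩
  | add x y _ _ hx hy =>
    obtain ⟨T, hT, A, hA, e⟩ := hx
    obtain ⟨T', hT', A', hA', e'⟩ := hy
    exact ⟨T + T', add_mem hT hT', A + A', add_mem hA hA', by
      rw [e, e']; ring⟩
  | smul c x _ hx =>
    obtain ⟨T, hT, A, hA, e⟩ := hx
    exact ⟨c • T, Submodule.smul_mem _ _ hT, c • A, Submodule.smul_mem _ _ hA,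
      by rw [e]; simp only [smul_add, smul_mul_assoc]⟩

theorem ext_A {k m : ℕ} {K : RR} (h : K ∈ GG k m) : K * gg m 0 ∈ GG (k + 1) (m + 1) := by
  induction h using Submodule.span_induction with
  | mem P hP =>
    obtain ⟨bs, ws, hk, hb, hw, hp, rfl⟩ := hP
    refine Submodule.subset_span ⟨bs, [m] :: ws, by simpa using hk, hb, ?_, ?_, ?_⟩
    · intro b hb'
      rcases List.mem_cons.1 hb' with rfl | h
      · simp
      · exact hw b h
    · rw [List.range_succ]
      refine List.Perm.trans ?_ (hp.append_right [m])
      rw [List.perm_iff_count]; intro a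
      simp [bidx, List.count_append, List.count_cons]
      try omega
    · simp only [wprod, List.map_cons, List.prod_cons, LL, List.foldl_nil]
      ring
  | zero => simp
  | add x y _ _ hx hy => rw [add_mul]; exact add_mem hx hy
  | smul c x _ hx => rw [smul_mul_assoc]; exact Submodule.smul_mem _ _ hx

theorem hw_comp {k m : ℕ} {A B K : RR} (hA : A ∈ MM m) (hB : B ∈ MM m) (hK : K ∈ MM m)
    (hE : DE (A * gg m 0 + B * gg m 1 + K * gg m 2) = 0)
    (hH : DH (A * gg m 0 + B * gg m 1 + K * gg m 2) =
      2 * (k : RR) * (A * gg m 0 + B * gg m 1 + K * gg m 2)) :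
    (DE A = 2 * B ∧ DE B = - K ∧ DE K = 0) ∧
    (DH A = (2 * k - 2) * A ∧ DH B = 2 * k * B ∧ DH K = (2 * k + 2) * K) := by
  have g := eqv_gg m
  have hn : ∀ Q ∈ MM m, 2 * (k : RR) * Q ∈ MM m := by
    intro Q hQ
    have : 2 * (k : RR) * Q = (2 * k : ℚ) • Q := by
      rw [Algebra.smul_def, map_mul, map_natCast, map_ofNat]
    rw [this]; exact Submodule.smul_mem _ _ hQ
  constructor
  · have := MM_uniq (m := m) (A := DE A - 2 * B) (B := DE B + K) (K := DE K)
      (sub_mem (MM_DE hA) (Hom_two_mul hB)) (add_mem (MM_DE hB) hK) (MM_DE hK) (by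
        simp only [map_add, Derivation.leibniz, smul_eq_mul, g.e0, g.e1, g.e2] at hE
        linear_combination hE)
    exact ⟨sub_eq_zero.1 this.1, eq_neg_of_add_eq_zero_left this.2.1, this.2.2⟩
  · have := MM_uniq (m := m) (A := DH A + 2 * A - 2 * k * A) (B := DH B - 2 * k * B)
      (K := DH K - 2 * K - 2 * k * K)
      (sub_mem (add_mem (MM_DH hA) (Hom_two_mul hA)) (hn _ hA)) (sub_mem (MM_DH hB) (hn _ hB))
      (sub_mem (sub_mem (MM_DH hK) (Hom_two_mul hK)) (hn _ hK)) (by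
        simp only [map_add, Derivation.leibniz, smul_eq_mul, g.h0, g.h1, g.h2] at hH
        linear_combination hH)
    refine ⟨?_, ?_, ?_⟩
    · linear_combination this.1
    · linear_combination this.2.1
    · linear_combination this.2.2

theorem fft (m : ℕ) : ∀ (k : ℕ) (P : RR), P ∈ MM m → DE P = 0 → DH P = 2 * (k : RR) * P →
    P ∈ GG k m := by
  induction m with
  | zero =>
    intro k P hP hE hH
    obtain ⟨c, rfl⟩ := MM_zero hP
    rcases k with _ | k
    · have : (MvPolynomial.C c : RR) = c • (1 : RR) := by
        rw [Algebra.smul_def, mul_one]; rfl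
      rw [this]
      refine Submodule.smul_mem _ _ (Submodule.subset_span ⟨[], [], ?_⟩)
      simp [bidx, bprod, wprod]
    · rw [MvPolynomial.derivation_C] at hH
      have h5 : (2 * ((k + 1 : ℕ) : RR)) ≠ 0 := by
        exact_mod_cast (by positivity : 2 * (k + 1) ≠ 0)
      rw [(mul_eq_zero.1 hH.symm).resolve_left h5]
      exact zero_mem _
  | succ m ih =>
    intro k P hP hE hH
    obtain ⟨A, hA, B, hB, K, hK, rfl⟩ := MM_dec hP
    have h1 := hw_comp hA hB hK hE hH
    have hKG : K ∈ GG (k + 1) m := ih _ _ hK h1.1.2.2 (by rw [h1.2.2.2]; push_cast; ring)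
    obtain ⟨T, hT, A', hA', B', hB', rfl⟩ := ext_K hKG
    have hT2 := GG_hw hT
    have g := eqv_gg m
    rcases k with _ | k
    · have hF := hw_zero_inv _ hE (by rw [hH]; simp)
      have hF' := hw_zero_inv _ hT2.2.1 (by rw [hT2.2.2]; simp)
      have hF2 : DF ((A - A') * gg m 0 + (B - B') * gg m 1) = 0 := by
        rw [show (A - A') * gg m 0 + (B - B') * gg m 1 = (A * gg m 0 + B * gg m 1 + K * gg m 2) -
          (A' * gg m 0 + B' * gg m 1 + K * gg m 2) by ring, map_sub, hF, hF', sub_zero]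
      have hA2 := sub_mem hA hA'
      have hB2 := sub_mem hB hB'
      have := MM_uniq (m := m) (A := DF (A - A')) (B := DF (B - B') - (A - A'))
        (K := 2 * (B - B'))
        (MM_DF hA2) (sub_mem (MM_DF hB2) hA2) (Hom_two_mul hB2) (by
          rw [map_add, Derivation.leibniz, Derivation.leibniz, g.f0, g.f1] at hF2
          simp only [smul_eq_mul] at hF2
          linear_combination hF2)
      have hB0 : B - B' = 0 := by simpa using this.2.2
      have hA0 : A - A' = 0 := by have := this.2.1; rw [hB0, map_zero, zero_sub, neg_eq_zero] at this; exact this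
      rw [sub_eq_zero] at hA0 hB0
      rw [hA0, hB0]; exact hT
    · have hB2 := sub_mem hB hB'
      have hA2 := sub_mem hA hA'
      have e1 : (A - A') * gg m 0 + (B - B') * gg m 1 + 0 * gg m 2 =
        (A * gg m 0 + B * gg m 1 + K * gg m 2) -
          (A' * gg m 0 + B' * gg m 1 + K * gg m 2) := by ring
      have h2 := hw_comp (k := k + 1) hA2 hB2 (zero_mem _)
        (by rw [e1, map_sub, hE, hT2.2.1, sub_zero])
        (by rw [e1, map_sub, hH, hT2.2.2]; ring)
      have hBG : B - B' ∈ GG (k + 1) m := ih _ _ hB2 (by rw [h2.1.2.1, neg_zero]) h2.2.2.1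
      obtain ⟨T', hT', A'', hA'', hTe⟩ := ext_B hBG
      have hT'2 := GG_hw hT'
      have hA3 := sub_mem hA2 hA''
      have e2 : (A - A' - A'') * gg m 0 + 0 * gg m 1 + 0 * gg m 2 =
        (A * gg m 0 + B * gg m 1 + K * gg m 2) -
          (A' * gg m 0 + B' * gg m 1 + K * gg m 2) - T' := by rw [hTe]; ring
      have h3 := hw_comp (k := k + 1) hA3 (zero_mem _) (zero_mem _)
        (by rw [e2, map_sub, map_sub, hE, hT2.2.1, hT'2.2.1]; simp)
        (by rw [e2, map_sub, map_sub, hH, hT2.2.2, hT'2.2.2]; ring)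
      have hAG : A - A' - A'' ∈ GG k m := ih _ _ hA3 (by rw [h3.1.1, mul_zero])
        (by rw [h3.2.1]; push_cast; ring)
      have e3 : A * gg m 0 + B * gg m 1 + K * gg m 2 =
        (A - A' - A'') * gg m 0 + (A' * gg m 0 + B' * gg m 1 + K * gg m 2) + T' := by
        rw [hTe]; ring
      rw [e3]
      exact add_mem (add_mem (ext_A hAG) hT) hT'

def SS (l : List ℕ) : Submodule ℚ (Fin 3 → RR) := Submodule.span ℚ {W | ∃ w : List ℕ, w.Perm l ∧ W = LL w}

theorem SS_perm {l l' : List ℕ} (h : l.Perm l') : SS l = SS l' := by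
  have : ∀ w : List ℕ, w.Perm l ↔ w.Perm l' := fun w => ⟨fun a => a.trans h, fun a => a.trans h.symm⟩
  simp only [SS, this]

theorem SS_LL (w : List ℕ) : LL w ∈ SS w := Submodule.subset_span ⟨w, List.Perm.refl _, rfl⟩

theorem br_zero_left (V : Fin 3 → RR) : br 0 V = 0 := by
  ext1 a; fin_cases a <;> simp [br]

theorem br_add_left (U U' V : Fin 3 → RR) : br (U + U') V = br U V + br U' V := by
  ext1 a; fin_cases a <;> simp [br] <;> ring

theorem br_rsmul_left (f : RR) (U V : Fin 3 → RR) : br (f • U) V = f • br U V := by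
  ext1 a; fin_cases a <;> simp [br] <;> ring

theorem br_smul_left (f : ℚ) (U V : Fin 3 → RR) : br (f • U) V = f • br U V := by
  rw [← algebraMap_smul RR f U, br_rsmul_left, algebraMap_smul]

theorem br_jac (P U V : Fin 3 → RR) : br P (br U V) = br (br P U) V - br (br P V) U := by
  ext1 a; fin_cases a <;> simp [br] <;> ring

theorem SS_br {l : List ℕ} (hl : l ≠ []) {P : Fin 3 → RR} (hP : P ∈ SS l) (a : ℕ) :
    br P (gg a) ∈ SS (l ++ [a]) := by
  induction hP using Submodule.span_induction with
  | mem P hP =>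
    obtain ⟨w, hw, rfl⟩ := hP
    have hw0 : w ≠ [] := by rintro rfl; exact hl hw.nil_eq.symm
    rw [← LL_append _ hw0]
    exact Submodule.subset_span ⟨_, hw.append_right _, rfl⟩
  | zero => rw [br_zero_left]; exact zero_mem _
  | add x y _ _ hx hy => rw [br_add_left]; exact add_mem hx hy
  | smul c x _ hx => rw [br_smul_left]; exact Submodule.smul_mem _ _ hx

theorem SS_exp (u : List ℕ) : ∀ (l : List ℕ), l ≠ [] → ∀ P : Fin 3 → RR, P ∈ SS l →
    br P (LL u) ∈ SS (l ++ u) := by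
  induction u using List.reverseRecOn with
  | nil =>
    intro l _ P _
    have : br P (LL []) = 0 := by ext1 a; fin_cases a <;> simp [br, LL]
    rw [this]; exact zero_mem _
  | append_singleton u a ih =>
    intro l hl P hP
    by_cases h : u = []
    · subst h; exact SS_br hl hP a
    · rw [LL_append _ h, br_jac]
      refine sub_mem ?_ ?_
      · rw [← List.append_assoc]
        exact SS_br (by simp [hl]) (ih l hl P hP) a
      · have := ih (l ++ [a]) (by simp) _ (SS_br hl hP a)
        rwa [SS_perm] at this
        rw [List.perm_iff_count]; intro b
        simp [List.count_append, List.count_cons]; try omega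

theorem merge_id (a b x y : Fin 3 → RR) : kp a b • br x y = (1 / 8 : ℚ) •
    (br (br (br x a) b) y - br (br (br y a) b) x + br (br (br x b) a) y - br (br (br y b) a) x
      + br (br (br x y) b) a + br (br (br x y) a) b) := by
  have h8 : ∀ U V : Fin 3 → RR, (8 : RR) • U = V → U = (1 / 8 : ℚ) • V := by
    rintro U V rfl
    have : (8 : RR) • U = (8 : ℚ) • U := by
      rw [← algebraMap_smul RR (8 : ℚ) U, map_ofNat]
    rw [this, smul_smul]; norm_num
  apply h8
  have hk : (2 : RR) * kp a b = 2 * (a 0 * b 2 + a 2 * b 0) + a 1 * b 1 := by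
    rw [kp, mul_add, mul_smul_comm, smul_half]
  ext1 i
  fin_cases i
  · simp [br]
    linear_combination 4 * (x 0 * y 1 - x 1 * y 0) * hk
  · simp [br]
    linear_combination 8 * (x 2 * y 0 - x 0 * y 2) * hk
  · simp [br]
    linear_combination 4 * (x 1 * y 2 - x 2 * y 1) * hk

theorem merge (u : List ℕ) (v x y : ℕ) (c : List ℕ) :
    kp (LL u) (gg v) • LL (x :: y :: c) ∈ SS (u ++ v :: x :: y :: c) := by
  induction c using List.reverseRecOn with
  | nil =>
    have hg : ∀ i, gg i ∈ SS [i] := fun i => SS_LL [i]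
    have perm : ∀ {l : List ℕ} {P : Fin 3 → RR}, P ∈ SS l →
        (∀ b, l.count b = (u ++ [v, x, y]).count b) → P ∈ SS (u ++ [v, x, y]) := by
      intro l P hP hc
      rwa [SS_perm (List.perm_iff_count.2 hc)] at hP
    change kp (LL u) (gg v) • br (gg x) (gg y) ∈ _
    rw [merge_id]
    apply Submodule.smul_mem
    refine add_mem (add_mem (sub_mem (add_mem (sub_mem ?_ ?_) ?_) ?_) ?_) ?_
    · refine perm (SS_br (by simp) (SS_br (by simp) (SS_exp u _ (by simp) _ (hg x)) v) y) ?_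
      intro b; simp [List.count_append, List.count_cons]; try omega
    · refine perm (SS_br (by simp) (SS_br (by simp) (SS_exp u _ (by simp) _ (hg y)) v) x) ?_
      intro b; simp [List.count_append, List.count_cons]; try omega
    · refine perm (SS_br (by simp) (SS_exp u _ (by simp) _ (SS_br (by simp) (hg x) v)) y) ?_
      intro b; simp [List.count_append, List.count_cons]; try omega
    · refine perm (SS_br (by simp) (SS_exp u _ (by simp) _ (SS_br (by simp) (hg y) v)) x) ?_
      intro b; simp [List.count_append, List.count_cons]; try omega
    · refine perm (SS_exp u _ (by simp) _ (SS_br (by simp) (SS_br (by simp) (hg x) y) v)) ?_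
      intro b; simp [List.count_append, List.count_cons]; try omega
    · refine perm (SS_br (by simp) (SS_exp u _ (by simp) _ (SS_br (by simp) (hg x) y)) v) ?_
      intro b; simp [List.count_append, List.count_cons]; try omega
  | append_singleton c a ih =>
    have e : LL (x :: y :: (c ++ [a])) = br (LL (x :: y :: c)) (gg a) :=
      LL_append (x :: y :: c) (by simp) a
    rw [e, ← br_rsmul_left]
    have := SS_br (by simp) ih a
    simpa using this

theorem merge' (u : List ℕ) (v : ℕ) (l : List ℕ) (hl : 2 ≤ l.length) {W : Fin 3 → RR} (hW : W ∈ SS l) :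
    kp (LL u) (gg v) • W ∈ SS (u ++ v :: l) := by
  induction hW using Submodule.span_induction with
  | mem P hP =>
    obtain ⟨w, hw, rfl⟩ := hP
    have hlen := hw.length_eq
    rcases w with _ | ⟨x, _ | ⟨y, c⟩⟩
    · simp at hlen; omega
    · simp at hlen; omega
    · rw [← SS_perm ((hw.cons v).append_left u)]
      exact merge u v x y c
  | zero => simp
  | add x y _ _ hx hy => rw [smul_add]; exact add_mem hx hy
  | smul c x _ hx => rw [smul_comm]; exact Submodule.smul_mem _ _ hx

theorem merge_all (bs : List (List ℕ × ℕ)) (l : List ℕ) (hl : 2 ≤ l.length) {W : Fin 3 → RR}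
    (hW : W ∈ SS l) : bprod bs • W ∈ SS (bidx bs ++ l) := by
  induction bs with
  | nil => simpa [bprod, bidx] using hW
  | cons b bs ih =>
    have e : bprod (b :: bs) = kp (LL b.1) (gg b.2) * bprod bs := by simp [bprod]
    rw [e, mul_smul]
    have := merge' b.1 b.2 _ (by simp; omega) ih
    simpa [bidx] using this

def TS (n : ℕ) : Submodule ℚ RR :=
  Submodule.span ℚ {P | ∃ (w : List ℕ) (v : ℕ), (w ++ [v]).Perm (List.range n) ∧ P = kp (LL w) (gg v)}

theorem kp_SS {l : List ℕ} {v n : ℕ} (h : (l ++ [v]).Perm (List.range n)) {W : Fin 3 → RR}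
    (hW : W ∈ SS l) : kp W (gg v) ∈ TS n := by
  induction hW using Submodule.span_induction with
  | mem P hP =>
    obtain ⟨w, hw, rfl⟩ := hP
    exact Submodule.subset_span ⟨w, v, (hw.append_right _).trans h, rfl⟩
  | zero => simp [kp]
  | add x y _ _ hx hy =>
    have : kp (x + y) (gg v) = kp x (gg v) + kp y (gg v) := by
      simp only [kp, Pi.add_apply, Algebra.smul_def]; ring
    rw [this]; exact add_mem hx hy
  | smul c x _ hx =>
    have : kp (c • x) (gg v) = c • kp x (gg v) := by
      simp only [kp, Pi.smul_apply, Algebra.smul_def]; ring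
    rw [this]; exact Submodule.smul_mem _ _ hx

theorem bidx_len (bs : List (List ℕ × ℕ)) (hb : ∀ b ∈ bs, b.1.length = 1) :
    (bidx bs).length = 2 * bs.length := by
  induction bs with
  | nil => simp [bidx]
  | cons b bs ih =>
    have h1 := ih fun b hb' => hb b (List.mem_cons_of_mem _ hb')
    have h2 := hb b (by simp)
    simp [bidx] at h1 ⊢
    omega

theorem bidx_len_ge (bs : List (List ℕ × ℕ)) (hb : ∀ b ∈ bs, b.1 ≠ []) :
    2 * bs.length ≤ (bidx bs).length := by
  induction bs with
  | nil => simp [bidx]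
  | cons b bs ih =>
    have h1 := ih fun b hb' => hb b (List.mem_cons_of_mem _ hb')
    have h2 := List.length_pos_iff.2 (hb b (by simp))
    simp [bidx] at h1 ⊢
    omega

theorem GG_TS {n : ℕ} (hn : n = 2 ∨ (3 ≤ n ∧ Odd n)) : GG 0 n ≤ TS n := by
  rw [GG, Submodule.span_le]
  rintro P ⟨bs, ws, hk, hb, -, hp, rfl⟩
  obtain rfl : ws = [] := List.length_eq_zero_iff.1 hk
  simp only [List.flatten_nil, List.append_nil] at hp
  have hlen := hp.length_eq
  rw [List.length_range] at hlen
  simp only [wprod, List.map_nil, List.prod_nil, mul_one]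
  have key : ∃ b ∈ bs, 2 ≤ b.1.length ∨ bs.length = 1 := by
    rcases hn with rfl | ⟨h3, hodd⟩
    · have h1 := bidx_len_ge bs hb
      rcases bs with _ | ⟨b, bs⟩
      · simp [bidx] at hlen
      · refine ⟨b, by simp, Or.inr ?_⟩
        rw [hlen] at h1; rw [List.length_cons] at h1 ⊢; omega
    · by_contra hcon
      push Not at hcon
      have := bidx_len bs (fun b hb' => by
        have h1 := (hcon b hb').1
        have h2 := List.length_pos_iff.2 (hb b hb')
        omega)
      rw [hlen] at this
      rw [this] at hodd
      exact (Nat.not_odd_iff_even.2 (even_two_mul _)) hodd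
  obtain ⟨b, hbm, hb2⟩ := key
  obtain ⟨s, t, rfl⟩ := List.append_of_mem hbm
  have e : bprod (s ++ b :: t) = kp (bprod (s ++ t) • LL b.1) (gg b.2) := by
    simp only [bprod, List.map_append, List.map_cons, List.prod_append, List.prod_cons, kp,
      Pi.smul_apply, smul_eq_mul, Algebra.smul_def]
    ring
  rw [e]
  have hperm : (bidx (s ++ t) ++ b.1 ++ [b.2]).Perm (List.range n) := by
    refine List.Perm.trans ?_ hp
    rw [List.perm_iff_count]; intro a
    simp [bidx, List.count_append, List.count_cons]; try omega
  rcases hb2 with hb2 | hb2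
  · exact kp_SS hperm (merge_all _ _ hb2 (SS_LL _))
  · have hst : s ++ t = [] := by
      apply List.length_eq_zero_iff.1
      simp at hb2 ⊢
      constructor <;> apply List.length_eq_zero_iff.1 <;> omega
    rw [hst] at hperm ⊢
    refine kp_SS hperm ?_
    simpa [bprod, bidx] using SS_LL b.1

theorem sl2_tr (v : sl2) : v.1 1 1 = - v.1 0 0 := by
  have h : Matrix.trace v.1 = 0 := v.2
  rw [Matrix.trace_fin_two] at h
  linarith

theorem sl2_ext {u v : sl2} (h0 : u.1 0 1 = v.1 0 1) (h1 : u.1 0 0 = v.1 0 0)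
    (h2 : u.1 1 0 = v.1 1 0) : u = v := by
  apply Subtype.ext
  ext i j
  fin_cases i <;> fin_cases j
  · exact h1
  · exact h0
  · exact h2
  · change u.1 1 1 = v.1 1 1
    rw [sl2_tr, sl2_tr, h1]

theorem sl2_dec (v : sl2) : v = v.1 0 1 • E + v.1 0 0 • H + v.1 1 0 • F := by
  apply sl2_ext <;> simp [E, H, F]

theorem kappa_formula (κ : sl2 →ₗ[ℚ] sl2 →ₗ[ℚ] ℚ)
    (hHH : κ H H = 2) (hEF : κ E F = 1) (hFE : κ F E = 1)
    (hHE : κ H E = 0) (hEH : κ E H = 0) (hHF : κ H F = 0) (hFH : κ F H = 0)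
    (hEE : κ E E = 0) (hFF : κ F F = 0) (u v : sl2) :
    κ u v = u.1 0 1 * v.1 1 0 + u.1 1 0 * v.1 0 1 + 2 * (u.1 0 0 * v.1 0 0) := by
  conv_lhs => rw [sl2_dec u, sl2_dec v]
  simp only [map_add, map_smul, LinearMap.add_apply, LinearMap.smul_apply, smul_eq_mul, hHH, hEF,
    hFE, hHE, hEH, hHF, hFH, hEE, hFF]
  ring

theorem brk01 (u v : sl2) : (⁅u, v⁆ : sl2).1 0 1 = 2 * (u.1 0 0 * v.1 0 1 - u.1 0 1 * v.1 0 0) := by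
  rw [LieAlgebra.SpecialLinear.sl_bracket]
  simp [Matrix.mul_apply, Fin.sum_univ_two, sl2_tr]
  ring
theorem brk00 (u v : sl2) : (⁅u, v⁆ : sl2).1 0 0 = (u.1 0 1 * v.1 1 0 - u.1 1 0 * v.1 0 1) := by
  rw [LieAlgebra.SpecialLinear.sl_bracket]
  simp [Matrix.mul_apply, Fin.sum_univ_two]
  ring
theorem brk10 (u v : sl2) : (⁅u, v⁆ : sl2).1 1 0 = 2 * (u.1 1 0 * v.1 0 0 - u.1 0 0 * v.1 1 0) := by
  rw [LieAlgebra.SpecialLinear.sl_bracket]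
  simp [Matrix.mul_apply, Fin.sum_univ_two, sl2_tr]
  ring

theorem sl2_add (u v : sl2) (i j : Fin 2) : (u + v).1 i j = u.1 i j + v.1 i j := rfl
theorem sl2_smul (c : ℚ) (v : sl2) (i j : Fin 2) : (c • v).1 i j = c * v.1 i j := rfl

def ell (i : ℕ) : sl2 →ₗ[ℚ] RR where
  toFun v := v.1 0 1 • gg i 0 + v.1 0 0 • gg i 1 + v.1 1 0 • gg i 2
  map_add' u v := by simp only [sl2_add, add_smul]; abel
  map_smul' c v := by
    simp only [sl2_smul, mul_smul, smul_add, RingHom.id_apply]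

theorem ell_apply (i : ℕ) (v : sl2) :
    ell i v = v.1 0 1 • gg i 0 + v.1 0 0 • gg i 1 + v.1 1 0 • gg i 2 := rfl

def tau (n : ℕ) : TP n →ₗ[ℚ] RR :=
  PiTensorProduct.lift
    ((MultilinearMap.mkPiAlgebra ℚ (Fin n) RR).compLinearMap fun i => ell i)

theorem tau_tprod (n : ℕ) (v : Fin n → sl2) :
    tau n (PiTensorProduct.tprod ℚ v) = ∏ i : Fin n, ell i (v i) := by
  simp [tau]

def Dact (a : sl2) : Derivation ℚ RR RR := a.1 0 1 • DE + a.1 0 0 • DH + a.1 1 0 • DF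

theorem Dact_ell (a : sl2) (i : ℕ) (v : sl2) : Dact a (ell i v) = ell i ⁅a, v⁆ := by
  have g := eqv_gg i
  simp only [ell_apply, brk01, brk00, brk10, Dact, Derivation.add_apply, Derivation.smul_apply,
    map_add, Derivation.map_smul, g.e0, g.e1, g.e2, g.h0, g.h1, g.h2, g.f0, g.f1, g.f2]
  simp only [Algebra.smul_def, map_mul, map_sub, map_ofNat]
  ring

theorem der_prod (D : Derivation ℚ RR RR) {ι : Type} [DecidableEq ι] (s : Finset ι) (f : ι → RR) :
    D (∏ j ∈ s, f j) = ∑ i ∈ s, ∏ j ∈ s, (if j = i then D (f j) else f j) := by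
  induction s using Finset.induction_on with
  | empty => simp
  | insert a s ha ih =>
    rw [Finset.prod_insert ha, Derivation.leibniz, ih, Finset.sum_insert ha, Finset.prod_insert ha,
      if_pos rfl, smul_eq_mul, smul_eq_mul, add_comm]
    congr 1
    · rw [mul_comm]; congr 1
      apply Finset.prod_congr rfl
      intro j hj; rw [if_neg]; rintro rfl; exact ha hj
    · rw [Finset.mul_sum]
      apply Finset.sum_congr rfl
      intro i hi
      rw [Finset.prod_insert ha, if_neg]
      rintro rfl; exact ha hi

theorem tau_act (n : ℕ) (a : sl2) (T : TP n) : tau n (actOn n a T) = Dact a (tau n T) := by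
  have : (tau n).comp (actOn n a) = (Dact a : RR →ₗ[ℚ] RR).comp (tau n) := by
    apply PiTensorProduct.ext
    ext1 v
    simp only [LinearMap.compMultilinearMap_apply, LinearMap.comp_apply, actOn, LinearMap.sum_apply,
      PiTensorProduct.map_tprod, map_sum, tau_tprod, Derivation.coeFn_coe]
    rw [der_prod]
    apply Finset.sum_congr rfl
    intro i _
    apply Finset.prod_congr rfl
    intro j _
    split_ifs
    · rw [Dact_ell]; rfl
    · rfl
  exact LinearMap.congr_fun this T

theorem dg_ofFn (n : ℕ) : dg (List.range n) = ∑ i : Fin n, wt ((i : ℕ), 0) := by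
  induction n with
  | zero => simp [dg]
  | succ n ih => rw [List.range_succ, dg_append, dg_single, Fin.sum_univ_castSucc, ih]; simp [wt]

theorem tau_MM (n : ℕ) (T : TP n) : tau n T ∈ MM n := by
  induction T using PiTensorProduct.induction_on with
  | smul_tprod r f =>
    rw [map_smul]
    apply Submodule.smul_mem
    rw [tau_tprod, MM, Hom, dg_ofFn]
    apply MvPolynomial.IsWeightedHomogeneous.prod
    intro i _
    have : ell i (f i) ∈ Hom [(i : ℕ)] :=
      add_mem (add_mem (Submodule.smul_mem _ _ (Hom_gg _ _)) (Submodule.smul_mem _ _ (Hom_gg _ _)))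
        (Submodule.smul_mem _ _ (Hom_gg _ _))
    rw [Hom, dg_single] at this
    exact this
  | add x y hx hy => rw [map_add]; exact add_mem hx hy

def ph (v : sl2) : Fin 3 → ℚ := ![v.1 1 0, 2 * v.1 0 0, v.1 0 1]

def ev (x : ℕ → sl2) : RR →ₐ[ℚ] ℚ := MvPolynomial.aeval fun p => ph (x p.1) p.2

theorem ev_gg (x : ℕ → sl2) (i : ℕ) : (fun a => ev x (gg i a)) = ph (x i) := by
  funext a; simp [ev, gg]

theorem ev_br (x : ℕ → sl2) (U V : Fin 3 → RR) :
    (fun a => ev x (br U V a)) = br (fun a => ev x (U a)) (fun a => ev x (V a)) := by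
  funext a; fin_cases a <;> simp [br, map_ofNat (ev x)]

theorem ev_kp (x : ℕ → sl2) (U V : Fin 3 → RR) :
    ev x (kp U V) = kp (fun a => ev x (U a)) (fun a => ev x (V a)) := by
  simp [kp]

theorem ph_br (u v : sl2) : ph ⁅u, v⁆ = br (ph u) (ph v) := by
  funext a; fin_cases a <;> simp [br, ph, brk01, brk00, brk10] <;> ring

theorem lBrk_append (l : List sl2) (h : l ≠ []) (a : sl2) : lBrk (l ++ [a]) = ⁅lBrk l, a⁆ := by
  cases l with
  | nil => exact absurd rfl h
  | cons b l => simp [lBrk]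

theorem ev_LL (x : ℕ → sl2) (w : List ℕ) : (fun a => ev x (LL w a)) = ph (lBrk (w.map x)) := by
  induction w using List.reverseRecOn with
  | nil =>
    funext a; fin_cases a <;> simp [LL, lBrk, ph]
  | append_singleton w b ih =>
    by_cases h : w = []
    · subst h; exact ev_gg x b
    · rw [LL_append _ h, ev_br, ih, ev_gg, List.map_append, List.map_singleton,
        lBrk_append _ (by simpa using h), ph_br]

theorem ev_inj {P Q : RR} (h : ∀ x, ev x P = ev x Q) : P = Q := by
  apply MvPolynomial.funext
  intro p
  let x : ℕ → sl2 := fun i => p (i, 2) • E + (p (i, 1) / 2) • H + p (i, 0) • F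
  have hx : (fun q : ℕ × Fin 3 => ph (x q.1) q.2) = p := by
    funext ⟨i, a⟩
    fin_cases a
    · simp [ph, x, E, H, F]
    · simp [ph, x, E, H, F]; ring
    · simp [ph, x, E, H, F]
  have := h x
  rw [ev, hx] at this
  simpa [MvPolynomial.aeval_eq_eval] using this

section withkappa

theorem ev_tau (κ : sl2 →ₗ[ℚ] sl2 →ₗ[ℚ] ℚ)
    (hκ : ∀ u v : sl2, κ u v = u.1 0 1 * v.1 1 0 + u.1 1 0 * v.1 0 1 + 2 * (u.1 0 0 * v.1 0 0))
    (n : ℕ) (x : ℕ → sl2) (T : TP n) : ev x (tau n T) = pairT κ n (fun i => x i) T := by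
  have : (ev x).toLinearMap.comp (tau n) = pairT κ n (fun i => x i) := by
    apply PiTensorProduct.ext
    ext1 v
    simp only [LinearMap.compMultilinearMap_apply, LinearMap.comp_apply, tau_tprod,
      AlgHom.toLinearMap_apply, map_prod, pairT, PiTensorProduct.lift.tprod,
      MultilinearMap.compLinearMap_apply, MultilinearMap.mkPiAlgebra_apply, LinearMap.flip_apply]
    apply Finset.prod_congr rfl
    intro i _
    have h0 := fun a => congrFun (ev_gg x i) a
    rw [ell_apply, hκ]
    simp [h0, ph]
    ring
  exact LinearMap.congr_fun this T

def sb : Fin 3 → sl2 := ![E, H, F]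
def sd : Fin 3 → sl2 := ![F, (1 / 2 : ℚ) • H, E]

def crd : sl2 ≃ₗ[ℚ] (Fin 3 → ℚ) where
  toFun v := ![v.1 0 1, v.1 0 0, v.1 1 0]
  invFun p := p 0 • E + p 1 • H + p 2 • F
  map_add' u v := by funext a; fin_cases a <;> simp
  map_smul' c v := by funext a; fin_cases a <;> simp
  left_inv v := (sl2_dec v).symm
  right_inv p := by funext a; fin_cases a <;> simp [E, H, F]

theorem pair_inj (κ : sl2 →ₗ[ℚ] sl2 →ₗ[ℚ] ℚ)
    (hκ : ∀ u v : sl2, κ u v = u.1 0 1 * v.1 1 0 + u.1 1 0 * v.1 0 1 + 2 * (u.1 0 0 * v.1 0 0))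
    (n : ℕ) (T : TP n) (h : ∀ x, pairT κ n x T = 0) : T = 0 := by
  have hb : ∀ a, Module.Basis.ofEquivFun crd a = sb a := by
    intro a
    rw [Module.Basis.coe_ofEquivFun]
    change (Pi.single a 1 : Fin 3 → ℚ) 0 • E + (Pi.single a 1 : Fin 3 → ℚ) 1 • H +
      (Pi.single a 1 : Fin 3 → ℚ) 2 • F = sb a
    fin_cases a <;> simp [sb]
  have hd : ∀ a b, κ (sb a) (sd b) = if a = b then 1 else 0 := by
    intro a b
    rw [hκ]
    fin_cases a <;> fin_cases b <;> simp [sb, sd, E, H, F]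
  have : (LinearMap.id : TP n →ₗ[ℚ] TP n) = ∑ l : Fin n → Fin 3,
      (pairT κ n (fun i => sd (l i))).smulRight (PiTensorProduct.tprod ℚ fun i => sb (l i)) := by
    apply PiTensorProduct.ext
    apply Module.Basis.ext_multilinear (fun _ => Module.Basis.ofEquivFun crd)
    intro v
    simp only [hb, LinearMap.compMultilinearMap_apply, LinearMap.id_apply, LinearMap.sum_apply,
      LinearMap.smulRight_apply, pairT, PiTensorProduct.lift.tprod,
      MultilinearMap.compLinearMap_apply, MultilinearMap.mkPiAlgebra_apply, LinearMap.flip_apply, hd]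
    rw [Finset.sum_eq_single v]
    · simp
    · intro l _ hl
      obtain ⟨i, hi⟩ := Function.ne_iff.1 hl
      rw [Finset.prod_eq_zero (Finset.mem_univ i), zero_smul]
      rw [if_neg (Ne.symm hi)]
    · simp
  have h2 := LinearMap.congr_fun this T
  simpa [h] using h2

theorem tau_inj (κ : sl2 →ₗ[ℚ] sl2 →ₗ[ℚ] ℚ)
    (hκ : ∀ u v : sl2, κ u v = u.1 0 1 * v.1 1 0 + u.1 1 0 * v.1 0 1 + 2 * (u.1 0 0 * v.1 0 0))
    (n : ℕ) : Function.Injective (tau n) := by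
  rw [injective_iff_map_eq_zero]
  intro T hT
  apply pair_inj κ hκ
  intro x
  have := ev_tau κ hκ n (fun i => if h : i < n then x ⟨i, h⟩ else 0) T
  rw [hT, map_zero] at this
  simpa using this.symm

theorem tau_t (κ : sl2 →ₗ[ℚ] sl2 →ₗ[ℚ] ℚ)
    (hκ : ∀ u v : sl2, κ u v = u.1 0 1 * v.1 1 0 + u.1 1 0 * v.1 0 1 + 2 * (u.1 0 0 * v.1 0 0))
    (n : ℕ) (σ : Equiv.Perm (Fin n)) (T : TP n)
    (hT : ∀ x : Fin n → sl2, pairT κ n x T = brkVal κ (x ∘ σ))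
    (w : List ℕ) (v : ℕ) (hw : w ++ [v] = List.ofFn fun i => (σ i : ℕ)) :
    tau n T = kp (LL w) (gg v) := by
  apply ev_inj
  intro x
  rw [ev_tau κ hκ, hT, ev_kp, ev_LL, ev_gg, brkVal]
  have e : List.ofFn ((fun i : Fin n => x i) ∘ σ) = w.map x ++ [x v] := by
    have : List.ofFn ((fun i : Fin n => x i) ∘ σ) = (List.ofFn fun i => (σ i : ℕ)).map x := by
      rw [List.map_ofFn]; rfl
    rw [this, ← hw]; simp
  rw [e, hκ, List.dropLast_concat]
  simp [kp, ph]
  ring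

theorem perm_exists (n : ℕ) (l : List ℕ) (h : l.Perm (List.range n)) :
    ∃ σ : Equiv.Perm (Fin n), l = List.ofFn fun i => (σ i : ℕ) := by
  have hlen : l.length = n := by simpa using h.length_eq
  have hnd : l.Nodup := h.nodup_iff.2 List.nodup_range
  subst hlen
  have hlt : ∀ i : Fin l.length, l.get i < l.length := fun i => by
    have := h.mem_iff.1 (List.get_mem l i)
    simpa using this
  let f : Fin l.length → Fin l.length := fun i => ⟨l.get i, hlt i⟩
  have hf : Function.Injective f := by
    intro i j hij
    exact List.nodup_iff_injective_get.1 hnd (congrArg Fin.val hij)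
  refine ⟨Equiv.ofBijective f (Finite.injective_iff_bijective.1 hf), ?_⟩
  simp [f]

theorem perm_ofFn (n : ℕ) (σ : Equiv.Perm (Fin n)) :
    (List.ofFn fun i => (σ i : ℕ)).Perm (List.range n) := by
  rw [List.perm_ext_iff_of_nodup _ List.nodup_range]
  · intro a
    simp only [List.mem_ofFn, List.mem_range]
    constructor
    · rintro ⟨i, rfl⟩; exact (σ i).2
    · intro h; exact ⟨σ.symm ⟨a, h⟩, by simp⟩
  · rw [List.nodup_ofFn]
    exact Fin.val_injective.comp σ.injective

end withkappa

theorem span_linear_tree_tensors_eq_invariants_of_odd_or_two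
    (κ : sl2 →ₗ[ℚ] sl2 →ₗ[ℚ] ℚ)
    (hHH : κ H H = 2) (hEF : κ E F = 1) (hFE : κ F E = 1)
    (hHE : κ H E = 0) (hEH : κ E H = 0) (hHF : κ H F = 0) (hFH : κ F H = 0)
    (hEE : κ E E = 0) (hFF : κ F F = 0) :
    ∀ n, (n = 2 ∨ (3 ≤ n ∧ Odd n)) →
    ∀ t : Equiv.Perm (Fin n) → TP n,
      (∀ σ (x : Fin n → sl2), pairT κ n x (t σ) = brkVal κ (x ∘ σ)) →
      Submodule.span ℚ (Set.range t) = Invariants n := by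
  intro n hn t ht
  have hκ := kappa_formula κ hHH hEF hFE hHE hEH hHF hFH hEE hFF
  have hinj := tau_inj κ hκ n
  apply le_antisymm
  · rw [Submodule.span_le]
    rintro _ ⟨σ, rfl⟩
    have hne : (List.ofFn fun i => (σ i : ℕ)) ≠ [] := by
      intro h
      have := congrArg List.length h
      simp at this
      omega
    have hτ := tau_t κ hκ n σ (t σ) (ht σ) _ _ (List.dropLast_append_getLast hne)
    simp only [Invariants, Submodule.coe_iInf, Set.mem_iInter, SetLike.mem_coe, LinearMap.mem_ker]
    intro x
    apply hinj
    have hk := kp_inv (eqv_LL (List.ofFn fun i => (σ i : ℕ)).dropLast)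
      (eqv_gg ((List.ofFn fun i => (σ i : ℕ)).getLast hne))
    rw [tau_act, hτ, map_zero]
    simp [Dact, hk.1, hk.2.1, hk.2.2]
  · intro T hT
    simp only [Invariants, Submodule.mem_iInf, LinearMap.mem_ker] at hT
    have hD : ∀ a, Dact a (tau n T) = 0 := fun a => by rw [← tau_act, hT, map_zero]
    have hE0 : DE (tau n T) = 0 := by simpa [Dact, E] using hD E
    have hH0 : DH (tau n T) = 0 := by simpa [Dact, H] using hD H
    have h1 : tau n T ∈ TS n := GG_TS hn (fft n 0 _ (tau_MM n T) hE0 (by simp [hH0]))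
    have h2 : TS n ≤ (Submodule.span ℚ (Set.range t)).map (tau n) := by
      rw [TS, Submodule.span_le]
      rintro _ ⟨w, v, hp, rfl⟩
      obtain ⟨σ, hσ⟩ := perm_exists n _ hp
      exact ⟨t σ, Submodule.subset_span ⟨σ, rfl⟩, tau_t κ hκ n σ (t σ) (ht σ) w v hσ⟩
    obtain ⟨T', hT', e⟩ := h2 h1
    rw [← hinj e]; exact hT'
end
end
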